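/- arXiv:2106.07249 — 3 statements merged into one kernel-verified Lean document; each statement's English description precedes it below -/
import Mathlib

section
/- Let X ⊆ C^ℕ be a transitive subshift over a finite alphabet C with sublinear factor complexity, i.e., the number of length-n words in the language L(X) is O(n). Then the winning shift W(X) ⊆ ℕ^ℕ is countable and has finite coding dimension. -/
open scoped BigOperators

/-- A language is regular if it is accepted by a DFA with finitely many states. -/
def IsRegularLang {α : Type*} (L : Set (List α)) : Prop :=
  ∃ (σ : Type) (_ : Fintype σ) (M : DFA α σ), ∀ w : List α, w ∈ M.accepts ↔ w ∈ L

/-- Pad a word over `A` to length `M` by prepending the padding symbol `none`. -/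
def padOne {A : Type*} (M : ℕ) (w : List A) : List (Option A) :=
  List.replicate (M - w.length) none ++ w.map some

/-- The padded form of a `d`-tuple of words over `A`, as a word over `(A ∪ {#})^d`. -/
def padTuple {A : Type*} {d : ℕ} (ws : Fin d → List A) : List (Fin d → Option A) :=
  List.ofFn fun j : Fin (Finset.univ.sup fun i : Fin d => (ws i).length) =>
    fun i : Fin d =>
      (padOne (Finset.univ.sup fun i : Fin d => (ws i).length) (ws i)).getD j.val none

/-- An abstract numeration system over the alphabet `A`, encoded by the order isomorphism
`rep : ℕ → L ⊆ A*` enumerating its (infinite) language in increasing order. -/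
structure ANS (A : Type*) where
  rep : ℕ → List A
  inj : Function.Injective rep

/-- A set `Y ⊆ ℕ^d` is `S`-recognizable if the padded representations of its members form
a regular language. -/
def ANS.Recognizable {A : Type*} (S : ANS A) {d : ℕ} (Y : Set (Fin d → ℕ)) : Prop :=
  IsRegularLang { w : List (Fin d → Option A) | ∃ t ∈ Y, w = padTuple fun i => S.rep (t i) }

/-- An ANS is addable if the graph of addition is `S`-recognizable. -/
def ANS.Addable {A : Type*} (S : ANS A) : Prop :=
  S.Recognizable { t : Fin 3 → ℕ | t 0 + t 1 = t 2 }

/-- An ANS is comparable if the relation `≤` is `S`-recognizable. -/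
def ANS.Comparable {A : Type*} (S : ANS A) : Prop :=
  S.Recognizable { t : Fin 2 → ℕ | t 0 ≤ t 1 }

/-- An ANS is regular if `ℕ` (i.e. its language) is `S`-recognizable. -/
def ANS.IsRegularANS {A : Type*} (S : ANS A) : Prop :=
  S.Recognizable (Set.univ : Set (Fin 1 → ℕ))

/-- The unary ANS, with language `0*` ordered by length. -/
def unaryANS : ANS Unit where
  rep := fun n => List.replicate n ()
  inj := fun m n h => by simpa using congrArg List.length h

/-- `x` is `S`-automatic: some DFAO outputs `x n` on input `rep_S n`. -/
def SAutomatic {A C : Type*} (S : ANS A) (x : ℕ → C) : Prop :=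
  ∃ (Q : Type) (_ : Fintype Q) (M : DFA A Q) (τ : Q → C),
    ∀ n : ℕ, τ (M.eval (S.rep n)) = x n

/-- The shift map on one-sided infinite words. -/
def shiftMap {C : Type*} (x : ℕ → C) : ℕ → C := fun n => x (n + 1)

/-- The orbit closure of `x` (closure in the product topology over the discrete alphabet):
`y` belongs to it iff every finite prefix of `y` occurs in `x`. -/
def orbitClosure {C : Type*} (x : ℕ → C) : Set (ℕ → C) :=
  { y | ∀ n : ℕ, ∃ m : ℕ, ∀ i < n, y i = x (m + i) }

/-- A subshift: a shift-invariant subset of `C^ℕ` that is closed in the product topology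
over the discrete alphabet (expressed combinatorially). -/
def IsSubshift {C : Type*} (X : Set (ℕ → C)) : Prop :=
  (∀ x ∈ X, shiftMap x ∈ X) ∧
  ∀ y : ℕ → C, (∀ n : ℕ, ∃ x ∈ X, ∀ i < n, y i = x i) → y ∈ X

/-- The language of a set of infinite words: all finite factors of its elements. -/
def LangOf {C : Type*} (X : Set (ℕ → C)) : Set (List C) :=
  { w | ∃ x ∈ X, ∃ p : ℕ, w = List.ofFn fun i : Fin w.length => x (p + i) }

/-- A word is right special in (the language of) `X` if it has two distinct one-letter
extensions in the language of `X`. -/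
def RightSpecial {C : Type*} (X : Set (ℕ → C)) (w : List C) : Prop :=
  ∃ a b : C, a ≠ b ∧ w ++ [a] ∈ LangOf X ∧ w ++ [b] ∈ LangOf X

/-- The factor complexity of `x`: the number of distinct factors of length `n`. -/
noncomputable def factorComplexity {C : Type*} (x : ℕ → C) (n : ℕ) : ℕ :=
  Set.ncard { w : List C | ∃ p : ℕ, w = List.ofFn fun i : Fin n => x (p + i) }

/-- `T` is a strategy tree witnessing `α ∈ W(X)`: a prefix-closed set of finite words
containing the empty word, in which every word of length `i` has exactly `α i + 1`
one-letter extensions, and all whose infinite branches lie in `X`. -/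
def IsStrategyTree {C : Type*} (X : Set (ℕ → C)) (α : ℕ → ℕ) (T : Set (List C)) : Prop :=
  ([] : List C) ∈ T ∧
  (∀ u v : List C, u ++ v ∈ T → u ∈ T) ∧
  (∀ w ∈ T, Set.ncard { c : C | w ++ [c] ∈ T } = α w.length + 1) ∧
  (∀ y : ℕ → C, (∀ n : ℕ, (List.ofFn fun i : Fin n => y i) ∈ T) → y ∈ X)

/-- The winning shift of `X ⊆ C^ℕ`, a subset of `ℕ^ℕ`. -/
def winningShift {C : Type*} (X : Set (ℕ → C)) : Set (ℕ → ℕ) :=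
  { α | ∃ T : Set (List C), IsStrategyTree X α T }

/-- Membership in the winning set of a set `X` of finite words, defined recursively:
`ε ∈ W(X)` iff `ε ∈ X`, and `a :: α ∈ W(X)` iff there is a set of `a + 1` letters `c`
such that `α` is in the winning set of the left quotient of `X` by `c`. -/
def winningSetMem {C : Type*} : List ℕ → Set (List C) → Prop
  | [], X => [] ∈ X
  | a :: α, X => ∃ S : Finset C, S.card = a + 1 ∧ ∀ c ∈ S, winningSetMem α { w | c :: w ∈ X }

/-- `Σ y = m`: the sum of the letters of `y ∈ ℕ^ℕ` is finite and equals `m`. -/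
def sumEq (y : ℕ → ℕ) (m : ℕ) : Prop :=
  (Function.support y).Finite ∧ ∑ᶠ i, y i = m

/-- `Y ⊆ ℕ^ℕ` has finite coding dimension: the sums `Σ y`, `y ∈ Y`, are uniformly bounded. -/
def FiniteCodingDim (Y : Set (ℕ → ℕ)) : Prop :=
  ∃ d : ℕ, ∀ y ∈ Y, ∀ F : Finset ℕ, ∑ i ∈ F, y i ≤ d

/-- The set `{ν(y) : y ∈ Y, Σy = k} ⊆ ℕᵏ`: nondecreasing `k`-tuples `t` such that the word
whose letter at `j` is the number of occurrences of `j` in `t` belongs to `Y`. -/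
def nuSet (Y : Set (ℕ → ℕ)) (k : ℕ) : Set (Fin k → ℕ) :=
  { t | Monotone t ∧ (fun j => Set.ncard { i : Fin k | t i = j }) ∈ Y }

/-- `Y ⊆ ℕ^ℕ` is weakly `S`-codable if `{ν(y) : y ∈ Y, Σy = k}` is `S`-recognizable for
every `k`. -/
def WeaklySCodable {A : Type*} (S : ANS A) (Y : Set (ℕ → ℕ)) : Prop :=
  ∀ k : ℕ, S.Recognizable (nuSet Y k)

/-- `Y ⊆ ℕ^ℕ` is `S`-codable if it is weakly `S`-codable and has finite coding dimension. -/
def SCodable {A : Type*} (S : ANS A) (Y : Set (ℕ → ℕ)) : Prop :=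
  WeaklySCodable S Y ∧ FiniteCodingDim Y

/-- `P_{111}(Y)`: strictly increasing triples `(a, b, c)` such that the word with letter `1`
exactly at positions `a`, `b`, `c` and `0` elsewhere belongs to `Y`. -/
def P111 (Y : Set (ℕ → ℕ)) : Set (Fin 3 → ℕ) :=
  { t | t 0 < t 1 ∧ t 1 < t 2 ∧
        (fun j => if j = t 0 ∨ j = t 1 ∨ j = t 2 then 1 else 0) ∈ Y }

/-- `P_v(Y)` for a finite word `v` over `ℕ`: strictly increasing tuples `n` such that the
word with letter `v i` at position `n i` and `0` elsewhere belongs to `Y`. -/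
def PvSet (v : List ℕ) (Y : Set (ℕ → ℕ)) : Set (Fin v.length → ℕ) :=
  { n | StrictMono n ∧
        (fun j => ∑ i : Fin v.length, if n i = j then v.get i else 0) ∈ Y }

/-- `X` is sofic: the set of label sequences of right-infinite paths in a finite
edge-labeled graph. -/
def IsSofic {C : Type*} (X : Set (ℕ → C)) : Prop :=
  ∃ (V : Type) (_ : Fintype V) (E : Set (V × C × V)),
    X = { x | ∃ p : ℕ → V, ∀ n : ℕ, (p n, x n, p (n + 1)) ∈ E }

/-- The factor `x[a..b-1]` of an infinite word. -/
def segmentOf {C : Type*} (x : ℕ → C) (a b : ℕ) : List C :=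
  List.ofFn fun i : Fin (b - a) => x (a + i)

/-- `U · V^ω`: infinite words that decompose as a word of `U` followed by infinitely many
nonempty words of `V`. -/
def omegaIter {C : Type*} (U V : Set (List C)) : Set (ℕ → C) :=
  { x | ∃ k : ℕ → ℕ, StrictMono k ∧ segmentOf x 0 (k 0) ∈ U ∧
        ∀ i : ℕ, segmentOf x (k i) (k (i + 1)) ∈ V }

/-- `X ⊆ C^ℕ` is ω-regular: a finite union of sets `U · V^ω` with `U`, `V` regular. -/
def IsOmegaRegular {C : Type*} (X : Set (ℕ → C)) : Prop :=
  ∃ (n : ℕ) (U V : Fin n → Set (List C)),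
    (∀ i, IsRegularLang (U i) ∧ IsRegularLang (V i)) ∧
    X = ⋃ i, omegaIter (U i) (V i)

/-- The words `p₁ = a`, `p_{k+1} = p_k bᵏ p_k` (with `a = false`, `b = true`). -/
def pWord : ℕ → List Bool
  | 0 => []
  | 1 => [false]
  | (k + 2) => pWord (k + 1) ++ List.replicate (k + 1) true ++ pWord (k + 1)

/-- Combinatorial continuity of `φ` on `Y` for product topologies over discrete alphabets:
every finite prefix of `φ y` is determined by a finite prefix of `y`. -/
def ContOn {B C : Type*} (φ : (ℕ → B) → (ℕ → C)) (Y : Set (ℕ → B)) : Prop :=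
  ∀ y ∈ Y, ∀ n : ℕ, ∃ m : ℕ, ∀ y' ∈ Y, (∀ i < m, y' i = y i) → ∀ i < n, φ y' i = φ y i

namespace Stmt6Aux

/-- The factor of length `n` at position `p`. -/
def wd {C : Type} (x : ℕ → C) (n p : ℕ) : Fin n → C := fun i => x (p + i)

theorem wd_eq_iff {C : Type} {x : ℕ → C} {n p q : ℕ} :
    wd x n p = wd x n q ↔ ∀ i < n, x (p + i) = x (q + i) := by
  constructor
  · intro h i hi
    exact congrFun h ⟨i, hi⟩
  · intro h
    funext i
    exact h i i.2

/-- `(p, q)` is a branching pair of order `n`. -/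
def Pair {C : Type} (x : ℕ → C) (n p q : ℕ) : Prop :=
  (∀ i < n, x (p + i) = x (q + i)) ∧ x (p + n) ≠ x (q + n)

/-- Number of factors. -/
noncomputable def P {C : Type} (x : ℕ → C) (n : ℕ) : ℕ := (Set.range (wd x n)).ncard

theorem pair_same_diff {C : Type} {x : ℕ → C} {n p q p' q' : ℕ}
    (h : Pair x n p q) (h' : Pair x n p' q') (hd : q + p' = p + q')
    (hlt : p < p') (hle : p' ≤ p + n) : False := by
  apply h.2
  obtain hlt2 | heq := lt_or_eq_of_le hle
  · have := h'.1 (p + n - p') (by omega)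
    rw [show p' + (p + n - p') = p + n by omega, show q' + (p + n - p') = q + n by omega] at this
    exact this
  · have := h'.1 0 (by omega)
    rw [show p' + 0 = p + n by omega, show q' + 0 = q + n by omega] at this
    exact this

/-- Two pairs with different offsets produce a local period. -/
theorem period_of_pairs {C : Type} {x : ℕ → C} {n p q p' q' t : ℕ}
    (h : Pair x n p q) (h' : Pair x n p' q') (ht : q' + p = p' + q + t) (y : ℕ)
    (h1 : p ≤ y) (h2 : p' ≤ y) (h3 : y + t < p + n) (h4 : y + t < p' + n) :
    x y = x (y + t) := by
  have e1 := h.1 (y + t - p) (by omega)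
  have e2 := h'.1 (y - p') (by omega)
  rw [show p + (y + t - p) = y + t by omega] at e1
  rw [show p' + (y - p') = y by omega] at e2
  rw [e1, e2]
  congr 1
  omega

theorem Pair.symm {C : Type} {x : ℕ → C} {n p q : ℕ} (h : Pair x n p q) : Pair x n q p :=
  ⟨fun i hi => (h.1 i hi).symm, fun e => h.2 e.symm⟩

/-- Transfer of a break of the period. -/
theorem break_transfer {C : Type} {x : ℕ → C} {n p q t y : ℕ} (h : Pair x n p q)
    (hy : p ≤ y) (hy2 : y + t < p + n) (hb : x y ≠ x (y + t)) :
    x (y - p + q) ≠ x (y - p + q + t) := by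
  have e1 := h.1 (y - p) (by omega)
  have e2 := h.1 (y - p + t) (by omega)
  rw [show p + (y - p) = y by omega, show q + (y - p) = y - p + q by omega] at e1
  rw [show p + (y - p + t) = y + t by omega,
    show q + (y - p + t) = y - p + q + t by omega] at e2
  rw [← e1, ← e2]
  exact hb

theorem class_struct {C : Type} (x : ℕ → C) (n l A B : ℕ) (hn : 4 * l ≤ n) :
    ∃ a b e f : ℕ, ∀ p q, A ≤ p → p < A + l → B ≤ q → q < B + l → Pair x n p q →
      (q + a = p + b ∨ p = e ∨ q = f) := by
  classical
  by_cases hex : ∃ p q p' q' t, A ≤ p ∧ p < A + l ∧ B ≤ q ∧ q < B + l ∧ Pair x n p q ∧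
      A ≤ p' ∧ p' < A + l ∧ B ≤ q' ∧ q' < B + l ∧ Pair x n p' q' ∧ 0 < t ∧
      q' + p = p' + q + t
  · obtain ⟨p, q, p', q', t, h1, h2, h3, h4, hp, h1', h2', h3', h4', hp', ht0, ht⟩ := hex
    have ht2 : t < 2 * l := by omega
    have perP : ∀ y, A + l ≤ y → y + t < A + n → x y = x (y + t) := fun y ha hb =>
      period_of_pairs hp hp' ht y (by omega) (by omega) (by omega) (by omega)
    have perQ : ∀ y, B + l ≤ y → y + t < B + n → x y = x (y + t) := fun y ha hb =>
      period_of_pairs hp'.symm hp.symm (t := t) (by omega) y (by omega) (by omega) (by omega)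
        (by omega)
    clear hp hp' ht h1 h2 h3 h4 h1' h2' h3' h4' p q p' q'
    set SP : Set ℕ := {y | A + l ≤ y ∧ x y ≠ x (y + t)} with hSP
    set SQ : Set ℕ := {y | B + l ≤ y ∧ x y ≠ x (y + t)} with hSQ
    have lbP : ∀ y ∈ SP, A + n ≤ y + t := by
      intro y hy
      by_contra hc
      exact hy.2 (perP y hy.1 (by omega))
    have lbQ : ∀ y ∈ SQ, B + n ≤ y + t := by
      intro y hy
      by_contra hc
      exact hy.2 (perQ y hy.1 (by omega))
    refine ⟨sInf SP, sInf SQ, sInf SP + t - n, sInf SQ + t - n, ?_⟩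
    intro p q h1 h2 h3 h4 hp
    -- transfers
    have trP : ∀ y ∈ SP, y + t < p + n → y - p + q ∈ SQ := by
      intro y hy hlt
      have := lbP y hy
      exact ⟨by omega, break_transfer hp (by omega) hlt hy.2⟩
    have trQ : ∀ y ∈ SQ, y + t < q + n → y - q + p ∈ SP := by
      intro y hy hlt
      have := lbQ y hy
      exact ⟨by omega, break_transfer hp.symm (by omega) hlt hy.2⟩
    have key : (p + n - t) ∈ SP ∨ (q + n - t) ∈ SQ := by
      by_contra hc
      push Not at hc
      obtain ⟨hc1, hc2⟩ := hc
      have e1 : x (p + n - t) = x (p + n - t + t) := by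
        by_contra hne
        exact hc1 ⟨by omega, hne⟩
      have e2 : x (q + n - t) = x (q + n - t + t) := by
        by_contra hne
        exact hc2 ⟨by omega, hne⟩
      have e3 := hp.1 (n - t) (by omega)
      rw [show p + (n - t) = p + n - t by omega, show q + (n - t) = q + n - t by omega] at e3
      rw [show p + n - t + t = p + n by omega] at e1
      rw [show q + n - t + t = q + n by omega] at e2
      exact hp.2 (by rw [← e1, ← e2, e3])
    rcases key with hk | hk
    · have hR : sInf SP ∈ SP := Nat.sInf_mem ⟨_, hk⟩
      have hle : sInf SP ≤ p + n - t := Nat.sInf_le hk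
      have := lbP _ hR
      by_cases heq : sInf SP = p + n - t
      · right; left; omega
      · left
        have m1 := trP _ hR (by omega)
        have hR' : sInf SQ ∈ SQ := Nat.sInf_mem ⟨_, m1⟩
        have hle' : sInf SQ ≤ sInf SP - p + q := Nat.sInf_le m1
        have := lbQ _ hR'
        have m2 := trQ _ hR' (by omega)
        have hle2 : sInf SP ≤ sInf SQ - q + p := Nat.sInf_le m2
        omega
    · have hR : sInf SQ ∈ SQ := Nat.sInf_mem ⟨_, hk⟩
      have hle : sInf SQ ≤ q + n - t := Nat.sInf_le hk
      have := lbQ _ hR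
      by_cases heq : sInf SQ = q + n - t
      · right; right; omega
      · left
        have m1 := trQ _ hR (by omega)
        have hR' : sInf SP ∈ SP := Nat.sInf_mem ⟨_, m1⟩
        have hle' : sInf SP ≤ sInf SQ - q + p := Nat.sInf_le m1
        have := lbP _ hR'
        have m2 := trP _ hR' (by omega)
        have hle2 : sInf SQ ≤ sInf SP - p + q := Nat.sInf_le m2
        omega
  · by_cases hne : ∃ p q, A ≤ p ∧ p < A + l ∧ B ≤ q ∧ q < B + l ∧ Pair x n p q
    · obtain ⟨p0, q0, h1, h2, h3, h4, hp⟩ := hne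
      refine ⟨p0, q0, 0, 0, ?_⟩
      intro p q h1' h2' h3' h4' hp'
      left
      rcases lt_trichotomy (q + p0) (p + q0) with hlt | heq | hgt
      · exact absurd ⟨p, q, p0, q0, p + q0 - (q + p0), h1', h2', h3', h4', hp', h1, h2, h3, h4,
          hp, by omega, by omega⟩ hex
      · exact heq
      · exact absurd ⟨p0, q0, p, q, q + p0 - (p + q0), h1, h2, h3, h4, hp, h1', h2', h3', h4',
          hp', by omega, by omega⟩ hex
    · exact ⟨0, 0, 0, 0, fun p q h1 h2 h3 h4 hp => absurd ⟨p, q, h1, h2, h3, h4, hp⟩ hne⟩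

theorem class_label {C : Type} (x : ℕ → C) (n l A B : ℕ) (hn : 4 * l ≤ n) :
    ∃ lab : ℕ → ℕ → Fin 3, ∀ p q p' q',
      A ≤ p → p < A + l → B ≤ q → q < B + l → Pair x n p q →
      A ≤ p' → p' < A + l → B ≤ q' → q' < B + l → Pair x n p' q' →
      lab p q = lab p' q' → wd x n p = wd x n p' := by
  classical
  obtain ⟨a, b, e, f, H⟩ := class_struct x n l A B hn
  refine ⟨fun p q => if q + a = p + b then 0 else if p = e then 1 else 2, ?_⟩
  intro p q p' q' h1 h2 h3 h4 hp h1' h2' h3' h4' hp' hl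
  have H1 := H p q h1 h2 h3 h4 hp
  have H2 := H p' q' h1' h2' h3' h4' hp'
  have : (q + a = p + b ∧ q' + a = p' + b) ∨ p = p' ∨ q = q' := by
    dsimp only at hl
    split_ifs at hl <;> first | omega | exact absurd hl (by decide)
  rcases this with ⟨g1, g2⟩ | g | g
  · rcases lt_trichotomy p p' with hlt | heq | hgt
    · exact (pair_same_diff hp hp' (by omega) hlt (by omega)).elim
    · rw [heq]
    · exact (pair_same_diff hp' hp (by omega) hgt (by omega)).elim
  · rw [g]
  · subst g
    rw [wd_eq_iff]
    intro i hi
    rw [hp.1 i hi, hp'.1 i hi]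

theorem wd_succ_eq {C : Type} {x : ℕ → C} {n p q : ℕ} :
    wd x (n + 1) p = wd x (n + 1) q ↔ wd x n p = wd x n q ∧ x (p + n) = x (q + n) := by
  rw [wd_eq_iff, wd_eq_iff]
  constructor
  · intro h
    exact ⟨fun i hi => h i (by omega), h n (by omega)⟩
  · rintro ⟨h1, h2⟩ i hi
    rcases Nat.lt_succ_iff_lt_or_eq.mp hi with h | h
    · exact h1 i h
    · rw [h]; exact h2

/-- Set of length `n+1` factors whose prefix of length `n` is right special. -/
def ES {C : Type} (x : ℕ → C) (n : ℕ) : Set (Fin (n + 1) → C) :=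
  {u | ∃ p q, Pair x n p q ∧ u = wd x (n + 1) p}

theorem card_ES {C : Type} [Fintype C] (x : ℕ → C) (n : ℕ) :
    (ES x n).ncard + 2 * P x n ≤ 2 * P x (n + 1) := by
  classical
  set L : Finset (Fin n → C) := (Set.range (wd x n)).toFinset with hL
  set L' : Finset (Fin (n + 1) → C) := (Set.range (wd x (n + 1))).toFinset with hL'
  set E : Finset (Fin (n + 1) → C) := (ES x n).toFinset with hE
  have c1 : P x n = L.card := Set.ncard_eq_toFinset_card' _
  have c2 : P x (n + 1) = L'.card := Set.ncard_eq_toFinset_card' _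
  have c3 : (ES x n).ncard = E.card := Set.ncard_eq_toFinset_card' _
  rw [c1, c2, c3]
  let pr : (Fin (n + 1) → C) → (Fin n → C) := fun u i => u i.castSucc
  have prwd : ∀ p, pr (wd x (n + 1) p) = wd x n p := fun p => by
    funext i
    simp [pr, wd]
  have m1 : ∀ u ∈ L', pr u ∈ L := by
    intro u hu
    simp only [hL', Set.mem_toFinset, Set.mem_range] at hu
    obtain ⟨p, rfl⟩ := hu
    simp only [hL, Set.mem_toFinset, Set.mem_range]
    exact ⟨p, (prwd p).symm⟩
  have EL : E ⊆ L' := by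
    intro u hu
    simp only [hE, Set.mem_toFinset] at hu
    obtain ⟨p, q, _, rfl⟩ := hu
    simp [hL']
  have m2 : ∀ u ∈ E, pr u ∈ L := fun u hu => m1 u (EL hu)
  rw [Finset.card_eq_sum_card_fiberwise (s := L') (t := L) (f := pr) (fun u hu => m1 u hu),
    Finset.card_eq_sum_card_fiberwise (s := E) (t := L) (f := pr) (fun u hu => m2 u hu),
    Finset.mul_sum, Finset.card_eq_sum_ones, Finset.mul_sum, ← Finset.sum_add_distrib]
  apply Finset.sum_le_sum
  intro v hv
  have hsub : E.filter (fun u => pr u = v) ⊆ L'.filter (fun u => pr u = v) :=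
    Finset.filter_subset_filter _ EL
  have hle := Finset.card_le_card hsub
  simp only [hL, Set.mem_toFinset, Set.mem_range] at hv
  obtain ⟨p0, hp0⟩ := hv
  have hpos : 0 < (L'.filter (fun u => pr u = v)).card := by
    apply Finset.card_pos.mpr
    refine ⟨wd x (n + 1) p0, ?_⟩
    simp [hL', prwd, hp0]
  rcases (E.filter (fun u => pr u = v)).eq_empty_or_nonempty with he | ⟨u, hu⟩
  · rw [he]; simp only [Finset.card_empty]; omega
  · have h2 : 1 < (L'.filter (fun u => pr u = v)).card := by
      rw [Finset.mem_filter] at hu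
      obtain ⟨hu1, hu2⟩ := hu
      simp only [hE, Set.mem_toFinset] at hu1
      obtain ⟨p, q, hpq, rfl⟩ := hu1
      rw [Finset.one_lt_card]
      refine ⟨wd x (n + 1) p, ?_, wd x (n + 1) q, ?_, ?_⟩
      · simp [hL', hu2]
      · rw [prwd] at hu2
        simp [hL', prwd, ← hu2]
        exact (wd_eq_iff.mpr hpq.1).symm
      · intro h
        exact hpq.2 (wd_succ_eq.mp h).2
    omega

theorem cover {C : Type} [Fintype C] (x : ℕ → C) (N : ℕ) :
    ∃ S : Finset ℕ, S.card + 2 * P x N ≤ 1 + 2 * P x (N + 1) ∧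
      ∀ j, ∃ r ∈ S, ∃ k < P x N, wd x N (r + k) = wd x N j := by
  classical
  let E : Finset (Fin (N + 1) → C) := (ES x N).toFinset
  let S : Finset ℕ := insert 0 (E.image (fun u => sInf {i | wd x (N + 1) i = u} + 1))
  refine ⟨S, ?_, ?_⟩
  · have h1 : S.card ≤ E.card + 1 :=
      (Finset.card_insert_le _ _).trans (by gcongr; exact Finset.card_image_le)
    have h2 := card_ES x N
    rw [Set.ncard_eq_toFinset_card'] at h2
    change E.card + _ ≤ _ at h2
    omega
  · have key : ∀ j, (∀ i < j, wd x N i ≠ wd x N j) →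
        ∃ r ∈ S, r ≤ j ∧ ∀ m, r ≤ m → m ≤ j → ∀ i < m, wd x N i ≠ wd x N m := by
      intro j
      induction j with
      | zero =>
        intro _
        exact ⟨0, by simp [S], le_rfl, fun m _ h i hi => by omega⟩
      | succ j ih =>
        intro hj
        have step : ∀ i, wd x (N + 1) i = wd x (N + 1) j → wd x N (i + 1) = wd x N (j + 1) := by
          intro i h
          rw [wd_eq_iff] at h ⊢
          intro k hk
          have := h (k + 1) (by omega)
          rw [show i + 1 + k = i + (k + 1) by ring, show j + 1 + k = j + (k + 1) by ring]
          exact this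
        have hfirst : ∀ i < j, wd x (N + 1) i ≠ wd x (N + 1) j := fun i hi h =>
          hj (i + 1) (by omega) (step i h)
        by_cases hb : ∃ q, Pair x N j q
        · obtain ⟨q, hq⟩ := hb
          refine ⟨j + 1, ?_, le_rfl, ?_⟩
          · simp only [S, Finset.mem_insert, Finset.mem_image]
            right
            refine ⟨wd x (N + 1) j, ?_, ?_⟩
            · simp only [E, Set.mem_toFinset]
              exact ⟨j, q, hq, rfl⟩
            · have hm : j ∈ {i | wd x (N + 1) i = wd x (N + 1) j} := rfl
              have h1 := Nat.sInf_le hm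
              have h2 : sInf {i | wd x (N + 1) i = wd x (N + 1) j} ∈
                {i | wd x (N + 1) i = wd x (N + 1) j} := Nat.sInf_mem ⟨_, hm⟩
              rcases lt_or_eq_of_le h1 with h | h
              · exact absurd h2 (hfirst _ h)
              · rw [h]
          · intro m hm1 hm2
            have : m = j + 1 := by omega
            subst this
            exact hj
        · have hjF : ∀ i < j, wd x N i ≠ wd x N j := by
            intro i hi h
            apply hfirst i hi
            rw [wd_succ_eq]
            refine ⟨h, ?_⟩
            by_contra hne
            exact hb ⟨i, wd_eq_iff.mp h.symm, fun e => hne e.symm⟩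
          obtain ⟨r, hr, hrj, hr2⟩ := ih hjF
          refine ⟨r, hr, by omega, ?_⟩
          intro m hm1 hm2
          by_cases hmj : m ≤ j
          · exact hr2 m hm1 hmj
          · have : m = j + 1 := by omega
            subst this
            exact hj
    intro j0
    have hm : j0 ∈ {i | wd x N i = wd x N j0} := rfl
    obtain ⟨j, hjdef⟩ : ∃ j, j = sInf {i | wd x N i = wd x N j0} := ⟨_, rfl⟩
    have hj : wd x N j = wd x N j0 := by
      rw [hjdef]
      exact Nat.sInf_mem (⟨_, hm⟩ : Set.Nonempty {i | wd x N i = wd x N j0})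
    have hjF : ∀ i < j, wd x N i ≠ wd x N j := by
      intro i hi h
      have h3 : i ∈ {i | wd x N i = wd x N j0} := h.trans hj
      have := Nat.sInf_le h3
      omega
    obtain ⟨r, hr, hrj, hr2⟩ := key j hjF
    refine ⟨r, hr, j - r, ?_, ?_⟩
    · have hinj : Set.InjOn (wd x N) (Finset.Icc r j : Finset ℕ) := by
        intro a ha b hb hab
        simp only [Finset.coe_Icc, Set.mem_Icc] at ha hb
        rcases lt_trichotomy a b with h | h | h
        · exact absurd hab (hr2 b hb.1 hb.2 a h)
        · exact h
        · exact absurd hab.symm (hr2 a ha.1 ha.2 b h)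
      have h1 := Finset.card_image_of_injOn hinj
      have h2 : ((Finset.Icc r j).image (wd x N)).card ≤ P x N := by
        rw [P, ← Set.ncard_coe_finset]
        apply Set.ncard_le_ncard _ (Set.toFinite _)
        intro u hu
        simp only [Finset.coe_image, Set.mem_image] at hu
        obtain ⟨a, _, rfl⟩ := hu
        exact ⟨a, rfl⟩
      rw [h1, Nat.card_Icc] at h2
      omega
    · rw [show r + (j - r) = j by omega]
      exact hj

/-- Right special factors of length `n`. -/
def RS {C : Type} (x : ℕ → C) (n : ℕ) : Set (Fin n → C) :=
  {v | ∃ p q, Pair x n p q ∧ v = wd x n p}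

theorem exists_small {f : ℕ → ℕ} {c : ℕ} (hf : ∀ n, f n ≤ c * n + c) (n : ℕ) :
    ∃ N, n + 1 ≤ N ∧ N ≤ 2 * n + 1 ∧ f (N + 1) ≤ f N + 3 * c := by
  by_contra hcon
  push Not at hcon
  have : ∀ k ≤ n + 1, (3 * c + 1) * k ≤ f (n + 1 + k) := by
    intro k
    induction k with
    | zero => simp
    | succ k ih =>
      intro hk
      have h1 := ih (by omega)
      have h2 := hcon (n + 1 + k) (by omega) (by omega)
      rw [show n + 1 + (k + 1) = n + 1 + k + 1 by ring]
      nlinarith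
  have h1 := this (n + 1) le_rfl
  have h2 := hf (n + 1 + (n + 1))
  nlinarith

theorem RS_bound_large {C : Type} [Fintype C] (x : ℕ → C) (c : ℕ) (hc : ∀ n, P x n ≤ c * n + c)
    (n : ℕ) (hn : 8 ≤ n) :
    (RS x n).ncard ≤ (1 + 6 * c) * (16 * c) * ((1 + 6 * c) * (16 * c)) * 3 := by
  classical
  obtain ⟨N, hN1, hN2, hN3⟩ := exists_small hc n
  obtain ⟨S, hS, hcov⟩ := cover x N
  have hScard : S.card ≤ 1 + 6 * c := by omega
  obtain ⟨l, hl⟩ : ∃ l, l = n / 8 + 1 := ⟨_, rfl⟩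
  have hl4 : 4 * l ≤ n := by omega
  have hPl : P x N ≤ 16 * c * l := by
    have h1 : c * N + c ≤ c * (2 * n + 2) := by nlinarith
    have h2 : c * (2 * n + 2) ≤ c * (16 * l) := Nat.mul_le_mul_left _ (by omega)
    have := hc N
    nlinarith
  have hlpos : 0 < l := by omega
  choose lab hlab using fun A B => class_label x n l A B hl4
  have data : ∀ v : Fin n → C, ∃ r k r' k' : ℕ, v ∈ RS x n → r ∈ S ∧ r' ∈ S ∧ k < P x N ∧
      k' < P x N ∧ Pair x n (r + k) (r' + k') ∧ v = wd x n (r + k) := by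
    intro v
    by_cases hv : v ∈ RS x n
    · obtain ⟨p0, q0, hpq, rfl⟩ := hv
      obtain ⟨r, hr, k, hk, e⟩ := hcov p0
      obtain ⟨r', hr', k', hk', e'⟩ := hcov q0
      rw [wd_eq_iff] at e e'
      refine ⟨r, k, r', k', fun _ => ⟨hr, hr', hk, hk', ⟨?_, ?_⟩, ?_⟩⟩
      · intro i hi
        rw [e i (by omega), e' i (by omega)]
        exact hpq.1 i hi
      · rw [e n (by omega), e' n (by omega)]
        exact hpq.2
      · rw [wd_eq_iff]
        intro i hi
        exact (e i (by omega)).symm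
    · exact ⟨0, 0, 0, 0, fun h => absurd h hv⟩
  choose r k r' k' D using data
  let T : Finset (((ℕ × ℕ) × (ℕ × ℕ)) × Fin 3) :=
    ((S ×ˢ Finset.range (16 * c)) ×ˢ (S ×ˢ Finset.range (16 * c))) ×ˢ Finset.univ
  have hT : T.card ≤ (1 + 6 * c) * (16 * c) * ((1 + 6 * c) * (16 * c)) * 3 := by
    simp only [T, Finset.card_product, Finset.card_range, Finset.card_univ, Fintype.card_fin]
    gcongr
  refine le_trans ?_ hT
  rw [Set.ncard_eq_toFinset_card']
  apply Finset.card_le_card_of_injOn (fun v => (((r v, k v / l), (r' v, k' v / l)),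
    lab (r v + k v / l * l) (r' v + k' v / l * l) (r v + k v) (r' v + k' v)))
  · intro v hv
    simp only [Set.coe_toFinset] at hv
    obtain ⟨d1, d2, d3, d4, d5, d6⟩ := D v hv
    simp only [T, Finset.coe_product, Set.mem_prod, Finset.mem_coe, Finset.mem_range,
      Finset.mem_univ, and_true]
    exact ⟨⟨d1, (Nat.div_lt_iff_lt_mul hlpos).mpr (by omega)⟩, d2,
      (Nat.div_lt_iff_lt_mul hlpos).mpr (by omega)⟩
  · intro v hv w hw hvw
    simp only [Set.coe_toFinset] at hv hw
    obtain ⟨d1, d2, d3, d4, d5, d6⟩ := D v hv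
    obtain ⟨g1, g2, g3, g4, g5, g6⟩ := D w hw
    simp only [Prod.mk.injEq] at hvw
    obtain ⟨⟨⟨a1, a2⟩, a3, a4⟩, a5⟩ := hvw
    have bd : ∀ m, m / l * l ≤ m ∧ m < m / l * l + l := fun m =>
      ⟨Nat.div_mul_le_self m l, by
        have := Nat.lt_div_mul_add (a := m) hlpos
        omega⟩
    have b1 := bd (k v)
    have b2 := bd (k' v)
    have b3 := bd (k w)
    have b4 := bd (k' w)
    rw [← a1, ← a2, ← a3, ← a4] at a5
    rw [← a2] at b3
    rw [← a4] at b4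
    rw [← a1, ← a3] at g5
    rw [d6, g6, ← a1]
    exact hlab (r v + k v / l * l) (r' v + k' v / l * l) _ _ _ _ (by omega) (by omega) (by omega)
      (by omega) d5 (by omega) (by omega) (by omega) (by omega) g5 a5

theorem RS_bound {C : Type} [Fintype C] (x : ℕ → C) (c : ℕ) (hc : ∀ n, P x n ≤ c * n + c) :
    ∃ K, ∀ n, (RS x n).ncard ≤ K := by
  refine ⟨(1 + 6 * c) * (16 * c) * ((1 + 6 * c) * (16 * c)) * 3 + (8 * c + c), fun n => ?_⟩
  by_cases hn : 8 ≤ n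
  · exact (RS_bound_large x c hc n hn).trans (Nat.le_add_right _ _)
  · have h1 : (RS x n).ncard ≤ P x n := by
      apply Set.ncard_le_ncard _ (Set.toFinite _)
      rintro v ⟨p, q, _, rfl⟩
      exact ⟨p, rfl⟩
    have h2 := hc n
    have h3 : c * n ≤ 8 * c := by nlinarith
    omega

theorem P_le {C : Type} [Fintype C] (X : Set (ℕ → C)) (x : ℕ → C) (hx : x ∈ X) (n : ℕ) :
    P x n ≤ Set.ncard { w ∈ LangOf X | w.length = n } := by
  have hfin : { w ∈ LangOf X | w.length = n }.Finite :=
    (List.finite_length_eq C n).subset (fun w hw => hw.2)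
  have hinj : Function.Injective (fun v : Fin n → C => List.ofFn v) := List.ofFn_injective
  rw [P, ← Set.ncard_image_of_injective _ hinj]
  apply Set.ncard_le_ncard _ hfin
  rintro _ ⟨_, ⟨p, rfl⟩, rfl⟩
  refine ⟨⟨x, hx, p, ?_⟩, by simp⟩
  apply List.ext_getElem
  · simp
  · intro i h1 h2
    simp [wd]

/-- Every node of a strategy tree lies on an infinite branch. -/
theorem exists_branch {C : Type} {X : Set (ℕ → C)} {α : ℕ → ℕ} {T : Set (List C)}
    (hT : IsStrategyTree X α T) (w : List C) (hw : w ∈ T) :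
    ∃ y ∈ X, ∀ i (h : i < w.length), y i = w[i] := by
  obtain ⟨h0, hpre, hext, hbr⟩ := hT
  have hne : ∀ u : List C, ∃ c : C, u ∈ T → u ++ [c] ∈ T := by
    intro u
    by_cases hu : u ∈ T
    · have h1 := hext u hu
      have h2 : Set.Nonempty {c : C | u ++ [c] ∈ T} := by
        apply Set.nonempty_of_ncard_ne_zero
        omega
      obtain ⟨c, hc⟩ := h2
      exact ⟨c, fun _ => hc⟩
    · have h1 := hext [] h0
      have h2 : Set.Nonempty {c : C | [] ++ [c] ∈ T} := by
        apply Set.nonempty_of_ncard_ne_zero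
        omega
      obtain ⟨c, hc⟩ := h2
      exact ⟨c, fun h => absurd h hu⟩
  choose g hg using hne
  let s : ℕ → List C := fun m => Nat.rec w (fun _ u => u ++ [g u]) m
  have s0 : s 0 = w := rfl
  have s1 : ∀ m, s (m + 1) = s m ++ [g (s m)] := fun m => rfl
  have sT : ∀ m, s m ∈ T := by
    intro m
    induction m with
    | zero => exact hw
    | succ m ih => rw [s1]; exact hg _ ih
  have sl : ∀ m, (s m).length = w.length + m := by
    intro m
    induction m with
    | zero => simp [s0]
    | succ m ih => rw [s1, List.length_append, ih]; simp; ring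
  have spre : ∀ m k, s m <+: s (m + k) := by
    intro m k
    induction k with
    | zero => exact List.prefix_rfl
    | succ k ih => exact ih.trans (by rw [← add_assoc, s1]; exact List.prefix_append _ _)
  have hlen : ∀ i, i < (s (i + 1)).length := fun i => by have := sl (i + 1); omega
  let y : ℕ → C := fun i => (s (i + 1))[i]'(hlen i)
  have hy : ∀ m i (h : i < (s m).length), y i = (s m)[i] := by
    intro m i h
    rcases le_total m (i + 1) with hm | hm
    · obtain ⟨k, hk⟩ := Nat.exists_eq_add_of_le hm
      have hp := spre m k
      rw [← hk] at hp
      exact (hp.getElem h).symm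
    · obtain ⟨k, hk⟩ := Nat.exists_eq_add_of_le hm
      have hp := spre (i + 1) k
      rw [← hk] at hp
      exact hp.getElem (hlen i)
  refine ⟨y, hbr y ?_, fun i h => hy 0 i h⟩
  intro n
  have hpr : (List.ofFn fun i : Fin n => y i) = (s n).take n := by
    apply List.ext_getElem
    · simp [sl]
    · intro i h1 h2
      simp only [List.getElem_ofFn, List.getElem_take]
      exact hy n i _
  rw [hpr]
  apply hpre _ ((s n).drop n)
  rw [List.take_append_drop]
  exact sT n

/-- Level `n` of a tree. -/
def Lev {C : Type} (T : Set (List C)) (n : ℕ) : Set (List C) := {w | w ∈ T ∧ w.length = n}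

theorem Lev_finite {C : Type} [Fintype C] (T : Set (List C)) (n : ℕ) : (Lev T n).Finite :=
  (List.finite_length_eq C n).subset (fun _ hw => hw.2)

theorem Lev_card {C : Type} [Fintype C] {X : Set (ℕ → C)} {α : ℕ → ℕ} {T : Set (List C)}
    (hT : IsStrategyTree X α T) (n : ℕ) :
    1 + ∑ i ∈ Finset.range n, α i ≤ (Lev T n).ncard := by
  classical
  obtain ⟨h0, hpre, hext, hbr⟩ := hT
  induction n with
  | zero =>
    have : Lev T 0 = {[]} := by
      ext w
      simp only [Lev, Set.mem_setOf_eq, Set.mem_singleton_iff, List.length_eq_zero_iff]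
      constructor
      · exact fun h => h.2
      · rintro rfl; exact ⟨h0, rfl⟩
    simp [this]
  | succ n ih =>
    rw [Finset.sum_range_succ]
    let A := (Lev_finite T n).toFinset
    let B := (Lev_finite T (n + 1)).toFinset
    have hA : (Lev T n).ncard = A.card := Set.ncard_eq_toFinset_card _ _
    have hB : (Lev T (n + 1)).ncard = B.card := Set.ncard_eq_toFinset_card _ _
    let Sg : Finset (Σ _ : List C, C) :=
      A.sigma (fun w => (Set.toFinite {c : C | w ++ [c] ∈ T}).toFinset)
    have hSg : Sg.card = A.card * (α n + 1) := by
      simp only [Sg, Finset.card_sigma]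
      rw [Finset.sum_const_nat]
      intro w hw
      simp only [A, Set.Finite.mem_toFinset] at hw
      rw [← Set.ncard_eq_toFinset_card, hext w hw.1, hw.2]
    have hle : Sg.card ≤ B.card := by
      apply Finset.card_le_card_of_injOn (fun s => s.1 ++ [s.2])
      · rintro ⟨w, c⟩ hs
        simp only [Sg, A, Finset.coe_sigma, Set.mem_sigma_iff, Finset.mem_coe,
          Set.Finite.mem_toFinset, Set.mem_setOf_eq] at hs
        simp only [B, Finset.mem_coe, Set.Finite.mem_toFinset]
        exact ⟨hs.2, by simp [hs.1.2]⟩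
      · rintro ⟨w, c⟩ _ ⟨w', c'⟩ _ h
        simp only at h
        obtain ⟨h1, h2⟩ := List.append_inj' h rfl
        simp only [List.cons.injEq, and_true] at h2
        subst h1 h2
        rfl
    have hpos : 1 ≤ A.card := by omega
    rw [hB]
    rw [hA] at ih
    nlinarith

theorem Lev_le_RS {C : Type} [Fintype C] {X : Set (ℕ → C)} {x : ℕ → C} (hX : X = orbitClosure x)
    {α : ℕ → ℕ} {T : Set (List C)} (hT : IsStrategyTree X α T) (n : ℕ) (hn : α n ≠ 0) :
    (Lev T n).ncard ≤ (RS x n).ncard := by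
  have hinj : Function.Injective (fun v : Fin n → C => List.ofFn v) := List.ofFn_injective
  rw [← Set.ncard_image_of_injective (RS x n) hinj]
  apply Set.ncard_le_ncard _ (Set.toFinite _)
  intro w hw
  have h1 := hT.2.2.1 w hw.1
  rw [hw.2] at h1
  have h2 : 1 < {c : C | w ++ [c] ∈ T}.ncard := by omega
  obtain ⟨a, ha, b, hb, hab⟩ := (Set.one_lt_ncard (Set.toFinite _)).mp h2
  have pos : ∀ c, w ++ [c] ∈ T → ∃ p, (∀ i (h : i < w.length), x (p + i) = w[i]) ∧
      x (p + n) = c := by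
    intro c hc
    obtain ⟨y, hyX, hy⟩ := exists_branch hT _ hc
    rw [hX] at hyX
    obtain ⟨p, hp⟩ := hyX (n + 1)
    refine ⟨p, ?_, ?_⟩
    · intro i h
      have hlt : i < n := by rw [← hw.2]; exact h
      rw [← hp i (by omega), hy i (by simp; omega), List.getElem_append_left h]
    · have := hw.2
      rw [← hp n (by omega), hy n (by simp; omega)]
      simp [← hw.2]
  obtain ⟨p, hp1, hp2⟩ := pos a ha
  obtain ⟨q, hq1, hq2⟩ := pos b hb
  have hl := hw.2
  refine ⟨wd x n p, ⟨p, q, ⟨?_, ?_⟩, rfl⟩, ?_⟩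
  · intro i hi
    rw [hp1 i (by omega), hq1 i (by omega)]
  · rw [hp2, hq2]; exact hab
  · apply List.ext_getElem
    · simp [hl]
    · intro i h1 h2
      simp only [List.getElem_ofFn, wd]
      exact hp1 i h2

theorem sum_bound {C : Type} [Fintype C] {X : Set (ℕ → C)} {x : ℕ → C} (hX : X = orbitClosure x)
    {K : ℕ} (hK : ∀ n, (RS x n).ncard ≤ K)
    {α : ℕ → ℕ} (hα : α ∈ winningShift X) (n : ℕ) :
    ∑ i ∈ Finset.range n, α i ≤ K + Fintype.card C := by
  obtain ⟨T, hT⟩ := hα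
  induction n with
  | zero => simp
  | succ n ih =>
    rw [Finset.sum_range_succ]
    by_cases hn : α n = 0
    · omega
    · have h1 := Lev_le_RS hX hT n hn
      have h2 := Lev_card hT n
      have h3 := hK n
      have hne : (Lev T n).Nonempty := by
        apply Set.nonempty_of_ncard_ne_zero
        omega
      obtain ⟨w, hw⟩ := hne
      have h4 := hT.2.2.1 w hw.1
      rw [hw.2] at h4
      have h5 : {c : C | w ++ [c] ∈ T}.ncard ≤ Fintype.card C := by
        rw [← Nat.card_eq_fintype_card, ← Set.ncard_univ]
        exact Set.ncard_le_ncard (Set.subset_univ _) (Set.toFinite _)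
      omega

theorem countable_of_bound (Y : Set (ℕ → ℕ)) (d : ℕ)
    (h : ∀ y ∈ Y, ∀ F : Finset ℕ, ∑ i ∈ F, y i ≤ d) : Y.Countable := by
  have hsub : Y ⊆ Set.range (fun f : ℕ →₀ ℕ => (f : ℕ → ℕ)) := by
    intro y hy
    have hfin : (Function.support y).Finite := by
      by_contra hinf
      obtain ⟨F, hF, hcard⟩ := Set.Infinite.exists_subset_card_eq hinf (d + 1)
      have h1 := h y hy F
      have h2 : F.card ≤ ∑ i ∈ F, y i := by
        rw [Finset.card_eq_sum_ones]
        apply Finset.sum_le_sum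
        intro i hi
        have : y i ≠ 0 := hF hi
        omega
      omega
    exact ⟨Finsupp.ofSupportFinite y hfin, rfl⟩
  exact (Set.countable_range _).mono hsub

end Stmt6Aux

/-- If `X` is a transitive subshift over a finite alphabet with sublinear
factor complexity, then `W(X)` is countable and has finite coding dimension. -/
theorem stmt6 {C : Type} [Fintype C] (X : Set (ℕ → C)) (hsub : IsSubshift X)
    (htrans : ∃ x ∈ X, X = orbitClosure x)
    (hcomp : ∃ c : ℕ, ∀ n : ℕ,
      Set.ncard { w ∈ LangOf X | w.length = n } ≤ c * n + c) :
    (winningShift X).Countable ∧ FiniteCodingDim (winningShift X) := by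
  obtain ⟨x, hx, hX⟩ := htrans
  obtain ⟨c, hc⟩ := hcomp
  obtain ⟨K, hK⟩ := Stmt6Aux.RS_bound x c
    (fun n => (Stmt6Aux.P_le X x hx n).trans (hc n))
  have hmain : ∀ y ∈ winningShift X, ∀ F : Finset ℕ, ∑ i ∈ F, y i ≤ K + Fintype.card C := by
    intro y hy F
    refine le_trans ?_ (Stmt6Aux.sum_bound hX hK hy (F.sup id + 1))
    apply Finset.sum_le_sum_of_subset
    intro i hi
    have : i ≤ F.sup id := Finset.le_sup (f := id) hi
    simp only [Finset.mem_range]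
    omega
  exact ⟨Stmt6Aux.countable_of_bound _ _ hmain, _, hmain⟩
end

section
/- There exist a comparable abstract numeration system S and an S-automatic infinite word x such that the winning shift W(O(x)) has infinite coding dimension, i.e., the sums Σα for α ∈ W(O(x)) are unbounded. -/
open scoped BigOperators

namespace Stmt11

abbrev A := Bool × Bool

/-- binary value with accumulator -/
def val (a : ℕ) : List Bool → ℕ
  | [] => a
  | b :: l => val (2 * a + b.toNat) l

theorem val_acc (l : List Bool) : ∀ a, val a l = a * 2 ^ l.length + val 0 l := by
  induction l with
  | nil => intro a; simp [val]
  | cons b l ih =>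
    intro a
    simp only [val, List.length_cons]
    rw [ih, ih (2 * 0 + b.toNat)]
    ring

theorem val_lt (l : List Bool) : val 0 l < 2 ^ l.length := by
  induction l with
  | nil => simp [val]
  | cons b l ih =>
    simp only [val, List.length_cons]
    rw [val_acc, pow_succ]
    cases b <;> simp <;> omega

theorem val_inj : ∀ (l m : List Bool), l.length = m.length → val 0 l = val 0 m → l = m := by
  intro l
  induction l with
  | nil => intro m h _; exact (List.length_eq_zero_iff.mp h.symm).symm
  | cons b l ih =>
    intro m h hv
    cases m with
    | nil => simp at h
    | cons c m =>
      simp only [List.length_cons, add_left_inj] at h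
      simp only [val] at hv
      rw [val_acc, val_acc m, h] at hv
      have h1 := val_lt l
      have h2 := val_lt m
      rw [h] at h1
      cases b <;> cases c <;> simp at hv
      · rw [ih m h hv]
      · omega
      · omega
      · rw [ih m h hv]

def W (u : List A) : ℕ := val 0 (u.map Prod.fst)
def M (u : List A) : ℕ := val 0 (u.map Prod.snd)

theorem W_lt (u : List A) : W u < 2 ^ u.length := by
  simpa [W] using val_lt (u.map Prod.fst)
theorem M_lt (u : List A) : M u < 2 ^ u.length := by
  simpa [M] using val_lt (u.map Prod.snd)

def B : ℕ → ℕ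
  | 0 => 0
  | l + 1 => B l + 2 ^ l * 2 ^ l

theorem B_mono : Monotone B := monotone_nat_of_le_succ fun n => by simp [B]

def rank (u : List A) : ℕ := B u.length + (W u * 2 ^ u.length + M u)

theorem mul_add_lt {a b n k : ℕ} (h : a < k) (hb : b < n) : a * n + b < k * n := by
  have : (a + 1) * n ≤ k * n := Nat.mul_le_mul_right _ h
  rw [add_mul, one_mul] at this
  omega

theorem rank_lt (u : List A) : rank u < B (u.length + 1) := by
  have := mul_add_lt (W_lt u) (M_lt u)
  simp only [rank, B]
  omega

theorem rank_lt_of_length {u v : List A} (h : u.length < v.length) : rank u < rank v := by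
  have h1 := rank_lt u
  have h2 : B (u.length + 1) ≤ B v.length := B_mono h
  have h3 : B v.length ≤ rank v := by simp [rank]
  omega

theorem rank_le_iff {u v : List A} (h : u.length = v.length) :
    rank u ≤ rank v ↔ (W u < W v ∨ (W u = W v ∧ M u ≤ M v)) := by
  have h1 := M_lt u
  have h2 := M_lt v
  simp only [rank, h] at *
  constructor
  · intro hh
    rcases lt_trichotomy (W u) (W v) with h3 | h3 | h3
    · exact Or.inl h3
    · right; rw [h3] at hh; exact ⟨h3, by omega⟩
    · have := mul_add_lt h3 h2
      omega
  · rintro (h3 | ⟨h3, h4⟩)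
    · have := mul_add_lt h3 h1
      omega
    · rw [h3]; omega

theorem rank_inj : Function.Injective rank := by
  intro u v h
  have hl : u.length = v.length := by
    rcases lt_trichotomy u.length v.length with h3 | h3 | h3
    · have := rank_lt_of_length h3; omega
    · exact h3
    · have := rank_lt_of_length h3; omega
  have h1 := (rank_le_iff hl).1 h.le
  have h2 := (rank_le_iff hl.symm).1 h.ge
  have hW : W u = W v := by omega
  have hM : M u = M v := by omega
  have e1 := val_inj _ _ (by simpa using hl) hW
  have e2 := val_inj _ _ (by simpa using hl) hM
  rw [← List.zip_unzip u, ← List.zip_unzip v]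
  simp [List.unzip_eq_map, e1, e2]

/-- letters from position `l-1` down to `0` -/
def word (y : ℕ → Bool) (i : ℕ) : ℕ → List A
  | 0 => []
  | l + 1 => (y l, i.testBit l) :: word y i l

@[simp] theorem word_length (y : ℕ → Bool) (i l : ℕ) : (word y i l).length = l := by
  induction l with
  | zero => rfl
  | succ l ih => simp [word, ih]

theorem mod_succ (i l : ℕ) : i % 2 ^ (l + 1) = (i.testBit l).toNat * 2 ^ l + i % 2 ^ l := by
  rw [pow_succ, Nat.mod_mul, Nat.toNat_testBit, Nat.mul_comm, Nat.add_comm, Nat.mul_comm]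

theorem M_word (y : ℕ → Bool) (i l : ℕ) : M (word y i l) = i % 2 ^ l := by
  induction l with
  | zero => simp [M, word, val, Nat.mod_one]
  | succ l ih =>
    simp only [M, word, List.map_cons, val] at *
    rw [val_acc, ih, mod_succ]
    simp

theorem W_word (q i l : ℕ) : W (word q.testBit i l) = q % 2 ^ l := by
  induction l with
  | zero => simp [W, word, val, Nat.mod_one]
  | succ l ih =>
    simp only [W, word, List.map_cons, val] at *
    rw [val_acc, ih, mod_succ]
    simp

theorem W_word_indep (y : ℕ → Bool) (i i' l : ℕ) : W (word y i l) = W (word y i' l) := by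
  have : (word y i l).map Prod.fst = (word y i' l).map Prod.fst := by
    induction l with
    | zero => rfl
    | succ l ih => simp [word, ih]
  simp [W, this]

theorem exists_B (n : ℕ) : ∃ l, B l ≤ n ∧ n < B (l + 1) := by
  induction n with
  | zero => exact ⟨0, by simp [B]⟩
  | succ n ih =>
    obtain ⟨l, h1, h2⟩ := ih
    by_cases h : n + 1 < B (l + 1)
    · exact ⟨l, by omega, h⟩
    · refine ⟨l + 1, by omega, ?_⟩
      have : 0 < 2 ^ (l + 1) * 2 ^ (l + 1) := by positivity
      rw [B]
      omega

theorem rank_surj : Function.Surjective rank := by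
  intro n
  obtain ⟨l, h1, h2⟩ := exists_B n
  have hp : 0 < 2 ^ l := by positivity
  refine ⟨word ((n - B l) / 2 ^ l).testBit ((n - B l) % 2 ^ l) l, ?_⟩
  have hq : (n - B l) / 2 ^ l < 2 ^ l := by
    rw [Nat.div_lt_iff_lt_mul hp]
    rw [B] at h2
    omega
  rw [rank, W_word, M_word, word_length, Nat.mod_eq_of_lt hq, Nat.mod_mod]
  have := Nat.div_add_mod' (n - B l) (2 ^ l)
  omega

noncomputable def rankEquiv : List A ≃ ℕ := Equiv.ofBijective rank ⟨rank_inj, rank_surj⟩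

noncomputable def S : ANS A where
  rep := rankEquiv.symm
  inj := rankEquiv.symm.injective

theorem rep_rank (u : List A) : S.rep (rank u) = u := rankEquiv.symm_apply_apply u
theorem rank_rep (n : ℕ) : rank (S.rep n) = n := rankEquiv.apply_symm_apply n

/-! ### The automatic word -/

abbrev Q := Option (Option Bool)

def outDFA : DFA A Q where
  step := fun q a => if a.2 then (match q with | none => some (some a.1) | some _ => some none)
    else q
  start := none
  accept := ∅

def out (q : Q) : Option Bool := q.join

noncomputable def x (n : ℕ) : Option Bool := out (outDFA.eval (S.rep n))

theorem x_auto : SAutomatic S x := ⟨Q, inferInstance, outDFA, out, fun _ => rfl⟩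

theorem evalFrom_cons' {α σ : Type} (D : DFA α σ) (s : σ) (a : α) (l : List α) :
    D.evalFrom s (a :: l) = D.evalFrom (D.step s a) l := rfl

theorem many (u : List A) : outDFA.evalFrom (some none) u = some none := by
  induction u with
  | nil => rfl
  | cons a u ih =>
    rw [evalFrom_cons']
    have : outDFA.step (some none) a = some none := by simp [outDFA]
    rw [this, ih]

theorem one (y : ℕ → Bool) (i b l) : outDFA.evalFrom (some (some b)) (word y i l) =
    if i % 2 ^ l = 0 then some (some b) else some none := by
  induction l with
  | zero => simp [word, Nat.mod_one]
  | succ l ih =>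
    rw [word, evalFrom_cons', mod_succ]
    cases h : i.testBit l
    · have : outDFA.step (some (some b)) (y l, false) = some (some b) := by simp [outDFA]
      rw [this, ih]; simp
    · have : outDFA.step (some (some b)) (y l, true) = some none := by simp [outDFA]
      rw [this, many]; simp

theorem zero_out (y : ℕ → Bool) (i l) :
    (∀ j < l, i % 2 ^ l = 2 ^ j → out (outDFA.evalFrom none (word y i l)) = some (y j)) ∧
    ((∀ j < l, i % 2 ^ l ≠ 2 ^ j) → out (outDFA.evalFrom none (word y i l)) = none) := by
  induction l with
  | zero => simp [word, out]
  | succ l ih =>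
    rw [word, evalFrom_cons', mod_succ]
    have hlt : i % 2 ^ l < 2 ^ l := Nat.mod_lt _ (by positivity)
    cases h : i.testBit l
    · have : outDFA.step none (y l, false) = none := by simp [outDFA]
      rw [this]
      simp only [Bool.toNat_false, zero_mul, zero_add]
      constructor
      · intro j hj hi
        refine ih.1 j ?_ hi
        rw [hi] at hlt
        exact (Nat.pow_lt_pow_iff_right (by norm_num)).1 hlt
      · intro hh
        exact ih.2 fun j hj => hh j (by omega)
    · have : outDFA.step none (y l, true) = some (some (y l)) := by simp [outDFA]
      rw [this, one]
      simp only [Bool.toNat_true, one_mul]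
      constructor
      · intro j hj hi
        have hjl : j = l := by
          by_contra hne
          have : 2 ^ j < 2 ^ l := Nat.pow_lt_pow_right (by norm_num) (by omega)
          omega
        subst hjl
        have : i % 2 ^ j = 0 := by omega
        simp [this, out]
      · intro hh
        have := hh l (by omega)
        have : i % 2 ^ l ≠ 0 := by omega
        simp [this, out]

theorem rank_word (y : ℕ → Bool) (i l : ℕ) (h : i < 2 ^ l) :
    rank (word y i l) = rank (word y 0 l) + i := by
  simp only [rank, word_length, M_word, Nat.mod_eq_of_lt h, Nat.zero_mod]
  rw [W_word_indep y i 0]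
  omega

def good (z : ℕ → Option Bool) : Prop := ∀ i, (z i).isSome = true ↔ ∃ j, i = 2 ^ j

theorem good_mem (z : ℕ → Option Bool) (hz : good z) : z ∈ orbitClosure x := by
  intro n
  let y : ℕ → Bool := fun j => (z (2 ^ j)).getD false
  refine ⟨rank (word y 0 n), fun i hi => ?_⟩
  have hin : i < 2 ^ n := hi.trans Nat.lt_two_pow_self
  rw [← rank_word y i n hin, x, rep_rank, DFA.eval]
  have key := zero_out y i n
  rw [Nat.mod_eq_of_lt hin] at key
  change z i = out (outDFA.evalFrom none _)
  by_cases hp : ∃ j, i = 2 ^ j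
  · obtain ⟨j, rfl⟩ := hp
    rw [key.1 j ((Nat.pow_lt_pow_iff_right (by norm_num)).1 hin) rfl]
    have := (hz (2 ^ j)).2 ⟨j, rfl⟩
    obtain ⟨b, hb⟩ := Option.isSome_iff_exists.1 this
    simp [y, hb]
  · rw [key.2 fun j _ hj => hp ⟨j, hj⟩]
    have := mt (hz i).1 hp
    simpa using this

open Classical in
noncomputable def α (i : ℕ) : ℕ := if ∃ j, i = 2 ^ j then 1 else 0

theorem α_mem : α ∈ winningShift (orbitClosure x) := by
  refine ⟨{w | ∀ i (h : i < w.length), (w[i]).isSome = true ↔ ∃ j, i = 2 ^ j}, ?_, ?_, ?_, ?_⟩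
  · intro i h; simp at h
  · intro u v h i hi
    have := h i (by simp; omega)
    rwa [List.getElem_append_left hi] at this
  · intro w hw
    have : {c : Option Bool | w ++ [c] ∈ {w : List (Option Bool) | ∀ i (h : i < w.length),
        (w[i]).isSome = true ↔ ∃ j, i = 2 ^ j}} =
        {c | c.isSome = true ↔ ∃ j, w.length = 2 ^ j} := by
      ext c
      simp only [Set.mem_ofPred_eq]
      constructor
      · intro h
        have := h w.length (by simp)
        simpa using this
      · intro h i hi
        by_cases hlt : i < w.length
        · rw [List.getElem_append_left hlt]; exact hw i hlt
        · have : i = w.length := by simp at hi; omega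
          subst this
          simpa using h
    rw [this, α]
    by_cases hp : ∃ j, w.length = 2 ^ j
    · have : {c : Option Bool | c.isSome = true ↔ ∃ j, w.length = 2 ^ j} =
          {some false, some true} := by
        ext c
        rcases c with _ | _ | _ <;> simp [hp]
      rw [this, if_pos hp, Set.ncard_pair (by simp)]
    · have : {c : Option Bool | c.isSome = true ↔ ∃ j, w.length = 2 ^ j} = {none} := by
        ext c
        rcases c with _ | _ | _ <;> simp only [hp] <;> simp
      rw [this, if_neg hp, Set.ncard_singleton]
  · intro z hz
    apply good_mem
    intro i
    have := hz (i + 1) i (by simp)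
    rwa [List.getElem_ofFn] at this

theorem not_fin : ¬ FiniteCodingDim (winningShift (orbitClosure x)) := by
  rintro ⟨d, h⟩
  have := h α α_mem ((Finset.range (d + 1)).image fun j => 2 ^ j)
  rw [Finset.sum_image (fun a _ b _ hab => Nat.pow_right_injective (le_refl 2) hab)] at this
  have h1 : ∀ j : ℕ, α (2 ^ j) = 1 := fun j => by
    unfold α; exact if_pos ⟨j, rfl⟩
  simp [h1] at this

/-! ### Comparability -/

inductive St
  | dead
  | fresh
  | pad
  | short
  | cmp (o p : Ordering)

/-- Surjection used to see that there are finitely many states. -/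
def St.code : Fin 4 ⊕ (Ordering × Ordering) → St
  | .inl 0 => .dead
  | .inl 1 => .fresh
  | .inl 2 => .pad
  | .inl 3 => .short
  | .inr (o, p) => .cmp o p

theorem St.code_surj : Function.Surjective St.code := by
  intro s
  cases s with
  | dead => exact ⟨.inl 0, rfl⟩
  | fresh => exact ⟨.inl 1, rfl⟩
  | pad => exact ⟨.inl 2, rfl⟩
  | short => exact ⟨.inl 3, rfl⟩
  | cmp o p => exact ⟨.inr (o, p), rfl⟩

noncomputable instance : Fintype St :=
  haveI := Finite.of_surjective _ St.code_surj
  Fintype.ofFinite St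

def stepC (s : St) (u v : Option A) : St :=
  match s, u, v with
  | .fresh, none, some _ => .pad
  | .fresh, some a, some b => .cmp (compare a.1.toNat b.1.toNat) (compare a.2.toNat b.2.toNat)
  | .pad, none, some _ => .pad
  | .pad, some _, some _ => .short
  | .short, some _, some _ => .short
  | .cmp o p, some a, some b =>
      .cmp (o.then (compare a.1.toNat b.1.toNat)) (p.then (compare a.2.toNat b.2.toNat))
  | _, _, _ => .dead

def accC : St → Prop
  | .dead => False
  | .cmp o p => o.then p ≠ .gt
  | _ => True

def cmpDFA : DFA (Fin 2 → Option A) St where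
  step := fun s z => stepC s (z 0) (z 1)
  start := .fresh
  accept := {s | accC s}

def acc (s : St) (z : List (Fin 2 → Option A)) : Prop := accC (cmpDFA.evalFrom s z)

theorem acc_cons (s z l) : acc s (z :: l) ↔ acc (stepC s (z 0) (z 1)) l := Iff.rfl

def pairs (u v : List A) : List (Fin 2 → Option A) :=
  List.zipWith (fun a b => ![some a, some b]) u v

def pre (v : List A) : List (Fin 2 → Option A) := v.map fun b => ![none, some b]

theorem acc_dead (l) : ¬ acc .dead l := by
  induction l with
  | nil => exact id
  | cons z l ih => rw [acc_cons]; simpa [stepC] using ih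

theorem vec_eq (z : Fin 2 → Option A) {a b} (h0 : z 0 = a) (h1 : z 1 = b) : z = ![a, b] := by
  funext i; fin_cases i <;> simp [h0, h1]

theorem acc_short (l) : acc .short l ↔ ∃ u v, u.length = v.length ∧ l = pairs u v := by
  induction l with
  | nil => exact ⟨fun _ => ⟨[], [], rfl, rfl⟩, fun _ => trivial⟩
  | cons z l ih =>
    rw [acc_cons]
    constructor
    · intro h
      rcases h0 : z 0 with _ | a <;> rcases h1 : z 1 with _ | b <;> rw [h0, h1] at h
      · exact absurd h (acc_dead l)
      · exact absurd h (acc_dead l)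
      · exact absurd h (acc_dead l)
      · obtain ⟨u, v, huv, rfl⟩ := ih.1 h
        exact ⟨a :: u, b :: v, by simp [huv], by simp [pairs, vec_eq z h0 h1]⟩
    · rintro ⟨u, v, huv, h⟩
      rcases u with _ | ⟨a, u⟩ <;> rcases v with _ | ⟨b, v⟩ <;> simp [pairs] at h huv
      obtain ⟨rfl, rfl⟩ := h
      exact ih.2 ⟨u, v, huv, rfl⟩

theorem acc_pad (l) : acc .pad l ↔ ∃ w u v, u.length = v.length ∧ l = pre w ++ pairs u v := by
  induction l with
  | nil => exact ⟨fun _ => ⟨[], [], [], rfl, rfl⟩, fun _ => trivial⟩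
  | cons z l ih =>
    rw [acc_cons]
    constructor
    · intro h
      rcases h0 : z 0 with _ | a <;> rcases h1 : z 1 with _ | b <;> rw [h0, h1] at h
      · exact absurd h (acc_dead l)
      · obtain ⟨w, u, v, huv, rfl⟩ := ih.1 h
        exact ⟨b :: w, u, v, huv, by simp [pre, vec_eq z h0 h1]⟩
      · exact absurd h (acc_dead l)
      · obtain ⟨u, v, huv, rfl⟩ := (acc_short l).1 h
        exact ⟨[], a :: u, b :: v, by simp [huv], by simp [pre, pairs, vec_eq z h0 h1]⟩
    · rintro ⟨w, u, v, huv, h⟩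
      rcases w with _ | ⟨c, w⟩
      · rcases u with _ | ⟨a, u⟩ <;> rcases v with _ | ⟨b, v⟩ <;> simp [pre, pairs] at h huv
        obtain ⟨rfl, rfl⟩ := h
        exact (acc_short _).2 ⟨u, v, huv, rfl⟩
      · simp only [pre, List.map_cons, List.cons_append, List.cons.injEq] at h
        obtain ⟨rfl, rfl⟩ := h
        exact ih.2 ⟨w, u, v, huv, rfl⟩

theorem compare_step (a b : ℕ) (s t : Bool) :
    (compare a b).then (compare s.toNat t.toNat) =
      compare (2 * a + s.toNat) (2 * b + t.toNat) := by
  rcases lt_trichotomy a b with h | h | h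
  · rw [compare_lt_iff_lt.2 h]
    symm
    refine compare_lt_iff_lt.2 ?_
    cases s <;> cases t <;> simp <;> omega
  · subst h
    cases s <;> cases t
    · simp
    · have : compare (2 * a) (2 * a + 1) = .lt := compare_lt_iff_lt.2 (by omega)
      simp [this]; rfl
    · have : compare (2 * a + 1) (2 * a) = .gt := compare_gt_iff_gt.2 (by omega)
      simp [this]; rfl
    · simp
  · rw [compare_gt_iff_gt.2 h]
    symm
    refine compare_gt_iff_gt.2 ?_
    cases s <;> cases t <;> simp <;> omega

theorem then_iff (a b c d : ℕ) :
    (compare a b).then (compare c d) ≠ .gt ↔ (a < b ∨ (a = b ∧ c ≤ d)) := by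
  rcases lt_trichotomy a b with h | h | h
  · rw [compare_lt_iff_lt.2 h]; simp [h]
  · subst h; simp [compare_gt_iff_gt]
  · rw [compare_gt_iff_gt.2 h]; simp; omega

theorem acc_cmp (l) : ∀ a b c d : ℕ, acc (.cmp (compare a b) (compare c d)) l ↔
    ∃ u v : List A, u.length = v.length ∧ l = pairs u v ∧
      (val a (u.map Prod.fst) < val b (v.map Prod.fst) ∨
        (val a (u.map Prod.fst) = val b (v.map Prod.fst) ∧
          val c (u.map Prod.snd) ≤ val d (v.map Prod.snd))) := by
  induction l with
  | nil =>
    intro a b c d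
    change (compare a b).then (compare c d) ≠ .gt ↔ _
    rw [then_iff]
    constructor
    · intro h; exact ⟨[], [], rfl, rfl, h⟩
    · rintro ⟨u, v, huv, h, h'⟩
      rcases u with _ | ⟨a, u⟩ <;> rcases v with _ | ⟨b, v⟩ <;> simp [pairs] at h huv
      exact h'
  | cons z l ih =>
    intro a b c d
    rw [acc_cons]
    constructor
    · intro h
      rcases h0 : z 0 with _ | e <;> rcases h1 : z 1 with _ | f <;> rw [h0, h1] at h
      · exact absurd h (acc_dead l)
      · exact absurd h (acc_dead l)
      · exact absurd h (acc_dead l)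
      · simp only [stepC, compare_step] at h
        obtain ⟨u, v, huv, rfl, h'⟩ := (ih _ _ _ _).1 h
        exact ⟨e :: u, f :: v, by simp [huv], by simp [pairs, vec_eq z h0 h1], h'⟩
    · rintro ⟨u, v, huv, h, h'⟩
      rcases u with _ | ⟨e, u⟩ <;> rcases v with _ | ⟨f, v⟩ <;> simp [pairs] at h huv
      obtain ⟨rfl, rfl⟩ := h
      simp only [stepC, compare_step, Matrix.cons_val_zero, Matrix.cons_val_one]
      exact (ih _ _ _ _).2 ⟨u, v, huv, rfl, h'⟩

theorem acc_start (l) : acc .fresh l ↔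
    (∃ c w u v, u.length = v.length ∧ l = pre (c :: w) ++ pairs u v) ∨
    (∃ u v : List A, u.length = v.length ∧ l = pairs u v ∧ rank u ≤ rank v) := by
  have hcmp := acc_cmp l 0 0 0 0
  have : (∃ u v : List A, u.length = v.length ∧ l = pairs u v ∧ rank u ≤ rank v) ↔
      acc (.cmp (compare 0 0) (compare 0 0)) l := by
    rw [hcmp]
    refine exists_congr fun u => exists_congr fun v => and_congr_right fun h =>
      and_congr_right fun _ => rank_le_iff h
  rw [this]
  rcases l with _ | ⟨z, l⟩
  · refine ⟨fun _ => Or.inr ?_, fun _ => trivial⟩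
    rw [hcmp]; exact ⟨[], [], rfl, rfl, by simp⟩
  · rw [acc_cons, acc_cons]
    constructor
    · intro h
      rcases h0 : z 0 with _ | e <;> rcases h1 : z 1 with _ | f <;> rw [h0, h1] at h
      · exact absurd h (acc_dead l)
      · obtain ⟨w, u, v, huv, rfl⟩ := (acc_pad l).1 h
        exact Or.inl ⟨f, w, u, v, huv, by simp [pre, vec_eq z h0 h1]⟩
      · exact absurd h (acc_dead l)
      · right; simpa [stepC] using h
    · rintro (⟨c, w, u, v, huv, h⟩ | h)
      · simp only [pre, List.map_cons, List.cons_append, List.cons.injEq] at h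
        obtain ⟨rfl, rfl⟩ := h
        exact (acc_pad _).2 ⟨w, u, v, huv, rfl⟩
      · rcases h0 : z 0 with _ | e <;> rcases h1 : z 1 with _ | f <;> rw [h0, h1] at h
        · exact absurd h (acc_dead l)
        · exact absurd h (acc_dead l)
        · exact absurd h (acc_dead l)
        · simpa [stepC] using h

theorem padTuple_eq (ws : Fin 2 → List A) (w u v : List A) (huv : u.length = v.length)
    (h0 : ws 0 = u) (h1 : ws 1 = w ++ v) : padTuple ws = pre w ++ pairs u v := by
  have hsup : (Finset.univ.sup fun i : Fin 2 => (ws i).length) = w.length + v.length := by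
    apply le_antisymm
    · apply Finset.sup_le
      intro i _
      fin_cases i
      · simp [h0]; omega
      · simp [h1]
    · have := Finset.le_sup (f := fun i : Fin 2 => (ws i).length) (Finset.mem_univ 1)
      simpa [h1] using this
  unfold padTuple
  apply List.ext_getElem
  · simp [hsup, pre, pairs, huv]
  · intro n hn1 hn2
    have hn : n < w.length + v.length := by simpa [hsup] using hn1
    simp only [List.getElem_ofFn, hsup]
    refine Eq.trans (vec_eq _ (a := if n < w.length then none else u[n - w.length]?)
      (b := (w ++ v)[n]?) ?_ ?_) ?_
    · rw [h0]
      have e : w.length + v.length - u.length = w.length := by omega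
      simp only [padOne, e]
      split_ifs with hlt
      · simp [List.getD, List.getElem?_append, hlt]
      · have : n - w.length < u.length := by omega
        simp [List.getD, List.getElem?_append, hlt, this]
    · rw [h1]
      have : n < (w ++ v).length := by simpa using hn
      simp only [padOne, List.length_append, Nat.sub_self, List.replicate_zero, List.nil_append,
        List.getD, List.getElem?_map]
      change (Option.map some (w ++ v)[n]?).getD none = _
      cases (w ++ v)[n]? <;> rfl
    · by_cases hlt : n < w.length
      · simp [pre, hlt, List.getElem_append, List.getElem?_append]
      · have a1 : n - w.length < u.length := by omega
        have a2 : n - w.length < v.length := by omega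
        simp [pre, pairs, hlt, List.getElem_append, List.getElem?_append, a1, a2]

theorem comparable : S.Comparable := by
  refine ⟨St, inferInstance, cmpDFA, fun l => ?_⟩
  change acc .fresh l ↔ _
  rw [acc_start]
  constructor
  · rintro (⟨c, w, u, v, huv, rfl⟩ | ⟨u, v, huv, rfl, h⟩)
    · refine ⟨![rank u, rank (c :: w ++ v)], ?_, ?_⟩
      · have : rank u < rank (c :: w ++ v) := rank_lt_of_length (by simp; omega)
        exact this.le
      · exact (padTuple_eq _ (c :: w) u v huv (by simp [rep_rank])
          (by simpa using rep_rank (c :: w ++ v))).symm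
    · refine ⟨![rank u, rank v], h, ?_⟩
      have := padTuple_eq (fun i => S.rep (![rank u, rank v] i)) [] u v huv
        (by simp [rep_rank]) (by simp [rep_rank])
      rw [this]; rfl
  · rintro ⟨t, ht, rfl⟩
    have ht' : t 0 ≤ t 1 := ht
    have hr : rank (S.rep (t 0)) ≤ rank (S.rep (t 1)) := by simpa [rank_rep] using ht'
    have hlen : (S.rep (t 0)).length ≤ (S.rep (t 1)).length := by
      by_contra hc
      have := rank_lt_of_length (not_le.1 hc)
      omega
    generalize hu : S.rep (t 0) = u at *
    generalize hv : S.rep (t 1) = v at *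
    have hsplit := List.take_append_drop (v.length - u.length) v
    have hd : u.length = (v.drop (v.length - u.length)).length := by simp; omega
    have := padTuple_eq (fun i => S.rep (t i)) (v.take (v.length - u.length)) u
      (v.drop (v.length - u.length)) hd hu (by rw [hsplit]; exact hv)
    rw [this]
    rcases hw : v.take (v.length - u.length) with _ | ⟨c, w⟩
    · right
      rw [hw, List.nil_append] at hsplit
      exact ⟨u, _, hd, rfl, by rw [hsplit]; exact hr⟩
    · left
      exact ⟨c, w, u, _, hd, rfl⟩

end Stmt11

/-- There exist a comparable ANS `S` and an `S`-automatic word `x` such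
that the winning shift of the subshift generated by `x` has infinite coding dimension. -/
theorem stmt11 :
    ∃ (A : Type) (_ : Fintype A) (S : ANS A) (C : Type) (_ : Fintype C) (x : ℕ → C),
      S.Comparable ∧ SAutomatic S x ∧
      ¬ FiniteCodingDim (winningShift (orbitClosure x)) :=
  ⟨Stmt11.A, inferInstance, Stmt11.S, Option Bool, inferInstance, Stmt11.x,
    Stmt11.comparable, Stmt11.x_auto, Stmt11.not_fin⟩
end

section
/- Let S be an addable abstract numeration system, let A ⊆ ℕ be a finite alphabet with 0 ∈ A, and let X ⊆ A^ℕ be a subshift that is weakly S-codable (respectively S-codable). Let Y ⊆ B^ℕ be a subshift over a finite alphabet B, let φ : Y → X be a conjugacy (a shift-commuting homeomorphism), and let b ∈ B be such that b^ω ∈ Y and φ(b^ω) = 0^ω. Then Y is weakly S-codable (respectively S-codable) with zero symbol b: there is a bijection π : B → {0, 1, …, |B| − 1} with π(b) = 0 such that the letterwise image π(Y) ⊆ ℕ^ℕ is weakly S-codable (respectively S-codable). -/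
open scoped BigOperators

namespace Stmt19Aux

/-! ### Closure properties of regular languages -/

section Regular

variable {α : Type*} {β : Type*}

theorem reg_of_nfa {σ : Type} [Fintype σ] (N : NFA α σ) (L : Set (List α))
    (h : ∀ w, w ∈ N.accepts ↔ w ∈ L) : IsRegularLang L := by
  classical
  refine ⟨Set σ, inferInstance, N.toDFA, fun w => ?_⟩
  rw [NFA.toDFA_correct]
  exact h w

theorem reg_comap {L : Set (List β)} (h : IsRegularLang L) (f : α → β) :
    IsRegularLang {w : List α | w.map f ∈ L} := by
  obtain ⟨σ, hσ, M, hM⟩ := h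
  refine ⟨σ, hσ, M.comap f, fun w => ?_⟩
  rw [DFA.accepts_comap]
  exact hM _

theorem reg_map {L : Set (List α)} (h : IsRegularLang L) (f : α → β) :
    IsRegularLang {w : List β | ∃ v ∈ L, w = v.map f} := by
  obtain ⟨σ, hσ, M, hM⟩ := h
  let N : NFA β σ := ⟨fun s c => {q | ∃ a, f a = c ∧ q = M.step s a}, {M.start}, M.accept⟩
  have key : ∀ (w : List β) (S : Set σ),
      w ∈ N.acceptsFrom S ↔ ∃ s ∈ S, ∃ v, w = v.map f ∧ M.evalFrom s v ∈ M.accept := by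
    intro w
    induction w with
    | nil =>
      intro S
      rw [NFA.nil_mem_acceptsFrom]
      constructor
      · rintro ⟨s, hs, ha⟩
        exact ⟨s, hs, [], rfl, ha⟩
      · rintro ⟨s, hs, v, hv, ha⟩
        have : v = [] := by simpa using hv.symm
        subst this
        exact ⟨s, hs, ha⟩
    | cons c w ih =>
      intro S
      rw [NFA.cons_mem_acceptsFrom, ih]
      constructor
      · rintro ⟨q, hq, v, rfl, ha⟩
        rw [NFA.mem_stepSet] at hq
        obtain ⟨s, hs, a, rfl, rfl⟩ := hq
        exact ⟨s, hs, a :: v, rfl, ha⟩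
      · rintro ⟨s, hs, v, hv, ha⟩
        cases v with
        | nil => simp at hv
        | cons a v =>
          simp only [List.map_cons, List.cons.injEq] at hv
          refine ⟨M.step s a, ?_, v, hv.2, ha⟩
          rw [NFA.mem_stepSet]
          exact ⟨s, hs, a, hv.1.symm, rfl⟩
  refine reg_of_nfa N _ fun w => ?_
  rw [NFA.accepts_eq_acceptsFrom_start, key]
  constructor
  · rintro ⟨s, hs, v, hv, ha⟩
    have hs : s = M.start := hs
    subst hs
    exact ⟨v, (hM v).1 ha, hv⟩
  · rintro ⟨v, hv, rfl⟩
    exact ⟨M.start, rfl, v, rfl, (hM v).2 hv⟩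

theorem reg_quot {L : Set (List α)} (h : IsRegularLang L) (a : α) :
    IsRegularLang {w : List α | ∃ j, List.replicate j a ++ w ∈ L} := by
  obtain ⟨σ, hσ, M, hM⟩ := h
  let N : NFA α σ := ⟨fun s c => {M.step s c},
    {q | ∃ j, q = M.evalFrom M.start (List.replicate j a)}, M.accept⟩
  have key : ∀ (w : List α) (S : Set σ),
      w ∈ N.acceptsFrom S ↔ ∃ s ∈ S, M.evalFrom s w ∈ M.accept := by
    intro w
    induction w with
    | nil =>
      intro S
      rw [NFA.nil_mem_acceptsFrom]
      rfl
    | cons c w ih =>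
      intro S
      rw [NFA.cons_mem_acceptsFrom, ih]
      constructor
      · rintro ⟨q, hq, ha⟩
        rw [NFA.mem_stepSet] at hq
        obtain ⟨s, hs, rfl⟩ := hq
        exact ⟨s, hs, ha⟩
      · rintro ⟨s, hs, ha⟩
        refine ⟨M.step s c, ?_, ha⟩
        rw [NFA.mem_stepSet]
        exact ⟨s, hs, rfl⟩
  refine reg_of_nfa N _ fun w => ?_
  rw [NFA.accepts_eq_acceptsFrom_start, key]
  have hh : ∀ j, List.replicate j a ++ w ∈ L ↔
      M.evalFrom (M.evalFrom M.start (List.replicate j a)) w ∈ M.accept := by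
    intro j
    rw [← hM, ← DFA.evalFrom_of_append]
    rfl
  constructor
  · rintro ⟨s, ⟨j, rfl⟩, ha⟩
    exact ⟨j, (hh j).2 ha⟩
  · rintro ⟨j, hj⟩
    exact ⟨_, ⟨j, rfl⟩, (hh j).1 hj⟩

theorem reg_pad {L : Set (List α)} (h : IsRegularLang L) (a : α) :
    IsRegularLang {w : List α | ∃ j, ∃ v ∈ L, w = List.replicate j a ++ v} := by
  classical
  obtain ⟨σ, hσ, M, hM⟩ := h
  let N : NFA α (Option σ) := ⟨fun s c => match s with
      | none => {q | c = a ∧ (q = none ∨ q = some M.start)}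
      | some s => {some (M.step s c)},
    {none, some M.start}, {q | ∃ s ∈ M.accept, q = some s}⟩
  have key1 : ∀ (w : List α) (s : σ),
      w ∈ N.acceptsFrom {some s} ↔ M.evalFrom s w ∈ M.accept := by
    intro w
    induction w with
    | nil =>
      intro s
      rw [NFA.nil_mem_acceptsFrom]
      simp [N]
    | cons c w ih =>
      intro s
      rw [NFA.cons_mem_acceptsFrom, NFA.stepSet_singleton]
      exact ih _
  have key2 : ∀ (w : List α), w ∈ N.acceptsFrom {none, some M.start} ↔
      ∃ j, ∃ v ∈ L, w = List.replicate j a ++ v := by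
    intro w
    induction w with
    | nil =>
      rw [NFA.nil_mem_acceptsFrom]
      constructor
      · rintro ⟨s, hs, q, hq, rfl⟩
        have : q = M.start := by simpa using hs
        subst this
        exact ⟨0, [], (hM _).1 hq, rfl⟩
      · rintro ⟨j, v, hv, hj⟩
        have : v = [] := by
          have := congrArg List.length hj
          simp at this
          exact List.eq_nil_of_length_eq_zero (by omega)
        subst this
        exact ⟨some M.start, by simp, M.start, (hM _).2 hv, rfl⟩
    | cons c w ih =>
      rw [NFA.cons_mem_acceptsFrom]
      have hs : N.stepSet {none, some M.start} c =
          {q | c = a ∧ (q = none ∨ q = some M.start)} ∪ {some (M.step M.start c)} := by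
        rw [Set.insert_eq, NFA.stepSet_union, NFA.stepSet_singleton, NFA.stepSet_singleton]
      rw [hs, NFA.acceptsFrom_union, Language.mem_add, key1]
      constructor
      · rintro (h | h)
        · by_cases hc : c = a
          · subst hc
            have e : {q : Option σ | c = c ∧ (q = none ∨ q = some M.start)} =
              {none, some M.start} := by ext q; simp
            rw [e, ih] at h
            obtain ⟨j, v, hv, rfl⟩ := h
            exact ⟨j + 1, v, hv, rfl⟩
          · have e : {q : Option σ | c = a ∧ (q = none ∨ q = some M.start)} = ∅ := by
              ext q; simp [hc]
            rw [e, NFA.mem_acceptsFrom] at h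
            exfalso
            obtain ⟨s, -, hs⟩ := h
            rw [NFA.mem_evalFrom_iff_exists] at hs
            simp at hs
        · exact ⟨0, c :: w, (hM _).1 h, rfl⟩
      · rintro ⟨j, v, hv, hj⟩
        cases j with
        | zero =>
          right
          simp only [List.replicate_zero, List.nil_append] at hj
          subst hj
          exact (hM _).2 hv
        | succ j =>
          left
          simp only [List.replicate_succ, List.cons_append, List.cons.injEq] at hj
          obtain ⟨rfl, hj⟩ := hj
          have e : {q : Option σ | c = c ∧ (q = none ∨ q = some M.start)} =
              {none, some M.start} := by ext q; simp
          rw [e, ih]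
          exact ⟨j, v, hv, hj⟩
  exact reg_of_nfa N _ fun w => key2 w

theorem reg_bool {κ : Type} [Fintype κ] {L : κ → Set (List α)} (h : ∀ i, IsRegularLang (L i))
    (F : (κ → Prop) → Prop) : IsRegularLang {w : List α | F fun i => w ∈ L i} := by
  classical
  choose σ hσ M hM using h
  let D : DFA α (∀ i, σ i) := ⟨fun s c i => (M i).step (s i) c, fun i => (M i).start,
    {s | F fun i => s i ∈ (M i).accept}⟩
  have key : ∀ (w : List α) (s : ∀ i, σ i), D.evalFrom s w = fun i => (M i).evalFrom (s i) w := by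
    intro w
    induction w with
    | nil => intro s; rfl
    | cons c w ih => intro s; exact ih _
  refine ⟨∀ i, σ i, inferInstance, D, fun w => ?_⟩
  have e : (fun i => w ∈ L i) = fun i => (M i).evalFrom (M i).start w ∈ (M i).accept := by
    funext i
    exact propext (hM i w).symm
  change F (fun i => D.evalFrom D.start w i ∈ (M i).accept) ↔ F _
  rw [e, key]

theorem reg_singleton (w : List α) : IsRegularLang ({w} : Set (List α)) := by
  have : Language.IsRegular ({w} : Set (List α)) := by
    apply Language.IsRegular.of_finite_range_leftQuotient
    refine Set.Finite.subset (s := insert (∅ : Set (List α))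
      ((fun n => ({w.drop n} : Set (List α))) '' Set.Iic w.length)) ?_ ?_
    · exact ((Set.finite_Iic _).image _).insert _
    · rintro _ ⟨x, rfl⟩
      by_cases hx : x <+: w
      · right
        obtain ⟨y, rfl⟩ := hx
        refine ⟨x.length, by simp, ?_⟩
        ext z
        change z ∈ ({List.drop x.length (x ++ y)} : Set (List α)) ↔ x ++ z ∈ ({x ++ y} : Set _)
        simp
      · left
        ext z
        change x ++ z ∈ ({w} : Set _) ↔ z ∈ (∅ : Set _)
        simp only [Set.mem_singleton_iff, Set.mem_empty_iff_false, iff_false]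
        rintro rfl
        exact hx ⟨z, rfl⟩
  obtain ⟨σ, hσ, M, hM⟩ := this
  exact ⟨σ, hσ, M, fun v => by rw [hM]; rfl⟩

theorem reg_head (a : α) : IsRegularLang {w : List α | w.head? ≠ some a} := by
  classical
  let D : DFA α (Option Bool) := ⟨fun s c => match s with
      | none => some (decide (c ≠ a))
      | some q => some q, none, {none, some true}⟩
  have key : ∀ (w : List α) (q : Bool), D.evalFrom (some q) w = some q := by
    intro w
    induction w with
    | nil => intro s; rfl
    | cons c w ih => intro s; exact ih _
  refine ⟨Option Bool, inferInstance, D, fun w => ?_⟩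
  rw [DFA.mem_accepts]
  cases w with
  | nil => simp [D]
  | cons c w =>
    have : D.eval (c :: w) = some (decide (c ≠ a)) := key w _
    rw [this]
    simp [D]

theorem reg_inter {L₁ L₂ : Set (List α)} (h₁ : IsRegularLang L₁) (h₂ : IsRegularLang L₂) :
    IsRegularLang (L₁ ∩ L₂) := by
  have := reg_bool (κ := Bool) (L := fun i => if i then L₁ else L₂)
    (by intro i; cases i <;> simpa) (fun p => p true ∧ p false)
  simpa using this

end Regular

/-! ### Recognizable relations over arbitrary index types, with free padding -/

section Rec

variable {A' : Type} (S : ANS A') {ι κ : Type}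

/-- The word of length `M` whose columns are the (padded) digits of the tuple `t`. -/
def wd (t : ι → ℕ) : ℕ → List (ι → Option A')
  | 0 => []
  | M + 1 => (fun i => (S.rep (t i)).reverse[M]?) :: wd t M

def Fits (t : ι → ℕ) (M : ℕ) : Prop := ∀ i, (S.rep (t i)).length ≤ M

def Lng (P : Set (ι → ℕ)) : Set (List (ι → Option A')) :=
  {w | ∃ t ∈ P, ∃ M, Fits S t M ∧ w = wd S t M}

def Rec (P : Set (ι → ℕ)) : Prop := IsRegularLang (Lng S P)

theorem length_wd (t : ι → ℕ) (M : ℕ) : (wd S t M).length = M := by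
  induction M with
  | zero => rfl
  | succ M ih => simp [wd, ih]

theorem map_wd (t : ι → ℕ) (f : κ → ι) (M : ℕ) :
    (wd S t M).map (fun c k => c (f k)) = wd S (fun k => t (f k)) M := by
  induction M with
  | zero => rfl
  | succ M ih => simp [wd, ih]

theorem wd_add (t : ι → ℕ) (M j : ℕ) (h : Fits S t M) :
    wd S t (M + j) = List.replicate j (fun _ => none) ++ wd S t M := by
  induction j with
  | zero => rfl
  | succ j ih =>
    rw [← add_assoc, wd, ih, List.replicate_succ, List.cons_append]
    congr 1
    funext i
    have := h i
    simp only [List.getElem?_eq_none_iff, List.length_reverse]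
    omega

theorem wd_cut (t : ι → ℕ) (j : ℕ) : ∀ (M : ℕ) (w : List (ι → Option A')), Fits S t M →
    List.replicate j (fun _ => none) ++ w = wd S t M →
    ∃ M', Fits S t M' ∧ w = wd S t M' := by
  induction j with
  | zero =>
    intro M w h e
    exact ⟨M, h, by simpa using e⟩
  | succ j ih =>
    intro M w h e
    cases M with
    | zero => simp [wd, List.replicate_succ] at e
    | succ M =>
      rw [wd, List.replicate_succ, List.cons_append, List.cons.injEq] at e
      refine ih M w (fun i => ?_) e.2
      have := congrFun e.1.symm i
      simpa using this

theorem wd_getElem {t t' : ι → ℕ} {M : ℕ} (h : wd S t M = wd S t' M) (i : ι) :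
    ∀ p < M, (S.rep (t i)).reverse[p]? = (S.rep (t' i)).reverse[p]? := by
  induction M with
  | zero => intro p hp; omega
  | succ M ih =>
    intro p hp
    simp only [wd, List.cons.injEq] at h
    rcases Nat.lt_succ_iff_lt_or_eq.1 hp with hp | rfl
    · exact ih h.2 p hp
    · exact congrFun h.1 i

theorem wd_inj {t t' : ι → ℕ} {M : ℕ} (ht : Fits S t M) (ht' : Fits S t' M)
    (h : wd S t M = wd S t' M) : t = t' := by
  funext i
  apply S.inj
  apply List.reverse_injective
  apply List.ext_getElem?
  intro p
  by_cases hp : p < M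
  · exact wd_getElem S h i p hp
  · have h1 := ht i
    have h2 := ht' i
    rw [List.getElem?_eq_none (by simp; omega), List.getElem?_eq_none (by simp; omega)]

theorem wd_mem_Lng {P : Set (ι → ℕ)} {t : ι → ℕ} {M : ℕ} (ht : Fits S t M) :
    wd S t M ∈ Lng S P ↔ t ∈ P := by
  constructor
  · rintro ⟨t', ht', M', hf, e⟩
    have : M = M' := by rw [← length_wd S t M, e, length_wd]
    subst this
    rw [wd_inj S ht hf e]
    exact ht'
  · intro h
    exact ⟨t, h, M, ht, rfl⟩

theorem exists_fits [Finite ι] (t : ι → ℕ) : ∃ M, Fits S t M := by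
  cases nonempty_fintype ι
  exact ⟨Finset.univ.sup fun i => (S.rep (t i)).length,
    fun i => Finset.le_sup (f := fun i => (S.rep (t i)).length) (Finset.mem_univ i)⟩

theorem Fits.mono {t : ι → ℕ} {M N : ℕ} (h : Fits S t M) (hMN : M ≤ N) : Fits S t N :=
  fun i => (h i).trans hMN

theorem wd_getD (t : ι → ℕ) (M j : ℕ) (hj : j < M) :
    (wd S t M)[j]? = some (fun i => (S.rep (t i)).reverse[M - 1 - j]?) := by
  induction M generalizing j with
  | zero => omega
  | succ M ih =>
    cases j with
    | zero => simp [wd]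
    | succ j =>
      rw [wd, List.getElem?_cons_succ, ih j (by omega)]
      have : M - 1 - j = M + 1 - 1 - (j + 1) := by omega
      rw [this]

theorem padOne_getD (w : List A') (M j : ℕ) (hw : w.length ≤ M) (hj : j < M) :
    (padOne M w).getD j none = w.reverse[M - 1 - j]? := by
  unfold padOne
  rw [List.getD_eq_getElem?_getD]
  by_cases h : j < M - w.length
  · rw [List.getElem?_append_left (by simpa using h), List.getElem?_replicate, if_pos h,
      List.getElem?_eq_none (by simp; omega)]
    rfl
  · rw [List.getElem?_append_right (by simpa using h)]
    simp only [List.length_replicate, List.getElem?_map]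
    rw [List.getElem?_reverse (by omega)]
    have : w.length - 1 - (M - 1 - j) = j - (M - w.length) := by omega
    rw [this, List.getElem?_eq_getElem (by omega)]
    rfl

theorem padTuple_eq {d : ℕ} (t : Fin d → ℕ) :
    padTuple (fun i => S.rep (t i)) =
      wd S t (Finset.univ.sup fun i => (S.rep (t i)).length) := by
  apply List.ext_getElem?
  intro j
  unfold padTuple
  set M := Finset.univ.sup fun i => (S.rep (t i)).length with hM
  by_cases hj : j < M
  · rw [wd_getD S t M j hj, List.getElem?_ofFn, dif_pos hj]
    congr 1
    funext i
    exact padOne_getD _ _ _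
      (Finset.le_sup (f := fun i => (S.rep (t i)).length) (Finset.mem_univ i)) hj
  · rw [List.getElem?_eq_none (by simp; omega), List.getElem?_eq_none (by rw [length_wd]; omega)]

theorem rec_of_recognizable {d : ℕ} {P : Set (Fin d → ℕ)} (h : S.Recognizable P) : Rec S P := by
  have := reg_pad h (fun _ => none)
  unfold Rec
  convert this using 1
  ext w
  constructor
  · rintro ⟨t, ht, M, hf, rfl⟩
    have hle : (Finset.univ.sup fun i => (S.rep (t i)).length) ≤ M :=
      Finset.sup_le fun i _ => hf i
    obtain ⟨j, rfl⟩ := Nat.exists_eq_add_of_le hle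
    refine ⟨j, _, ⟨t, ht, rfl⟩, ?_⟩
    rw [padTuple_eq, wd_add]
    exact fun i => Finset.le_sup (f := fun i => (S.rep (t i)).length) (Finset.mem_univ i)
  · rintro ⟨j, v, ⟨t, ht, rfl⟩, rfl⟩
    have hf : Fits S t (Finset.univ.sup fun i => (S.rep (t i)).length) :=
      fun i => Finset.le_sup (f := fun i => (S.rep (t i)).length) (Finset.mem_univ i)
    refine ⟨t, ht, _, hf.mono S (Nat.le_add_right _ j), ?_⟩
    rw [padTuple_eq, wd_add S t _ _ hf]

theorem recognizable_of_rec {d : ℕ} {P : Set (Fin d → ℕ)} (h : Rec S P) : S.Recognizable P := by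
  have := reg_inter h (reg_head (fun _ : Fin d => (none : Option A')))
  unfold ANS.Recognizable
  convert this using 1
  ext w
  constructor
  · rintro ⟨t, ht, rfl⟩
    have hf : Fits S t (Finset.univ.sup fun i => (S.rep (t i)).length) :=
      fun i => Finset.le_sup (f := fun i => (S.rep (t i)).length) (Finset.mem_univ i)
    refine ⟨⟨t, ht, _, hf, padTuple_eq S t⟩, ?_⟩
    rw [Set.mem_ofPred_eq, padTuple_eq]
    generalize hM : (Finset.univ.sup fun i => (S.rep (t i)).length) = M
    cases M with
    | zero => simp [wd]
    | succ M =>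
      intro e
      simp only [wd, List.head?_cons, Option.some.injEq] at e
      have : (Finset.univ.sup fun i => (S.rep (t i)).length) ≤ M := by
        apply Finset.sup_le
        intro i _
        simpa using congrFun e i
      omega
  · rintro ⟨⟨t, ht, M, hf, rfl⟩, hh⟩
    refine ⟨t, ht, ?_⟩
    rw [padTuple_eq]
    have hle : (Finset.univ.sup fun i => (S.rep (t i)).length) ≤ M :=
      Finset.sup_le fun i _ => hf i
    obtain ⟨j, rfl⟩ := Nat.exists_eq_add_of_le hle
    cases j with
    | zero => rfl
    | succ j =>
      exfalso
      apply hh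
      rw [wd_add]
      · simp [List.replicate_succ]
      · exact fun i => Finset.le_sup (f := fun i => (S.rep (t i)).length) (Finset.mem_univ i)

/-- Projection along an arbitrary map of index types. -/
theorem rec_proj [Finite ι] {P : Set (ι → ℕ)} (h : Rec S P) (f : κ → ι) :
    Rec S {t : κ → ℕ | ∃ s ∈ P, t = fun k => s (f k)} := by
  have := reg_quot (reg_map h (fun (c : ι → Option A') k => c (f k))) (fun _ => none)
  unfold Rec
  convert this using 1
  ext w
  constructor
  · rintro ⟨t, ⟨s, hs, rfl⟩, M, hf, rfl⟩
    obtain ⟨N, hN⟩ := exists_fits S s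
    refine ⟨N, _, ⟨s, hs, M + N, hN.mono S (by omega), rfl⟩, ?_⟩
    rw [map_wd, wd_add S _ _ _ hf]
  · rintro ⟨j, v, ⟨s, hs, M, hf, rfl⟩, e⟩
    rw [map_wd] at e
    obtain ⟨M', h1, h2⟩ := wd_cut S _ j M w (fun k => hf (f k)) e
    exact ⟨_, ⟨s, hs, rfl⟩, M', h1, h2⟩

theorem rec_univ_unit (hadd : S.Addable) : Rec S (Set.univ : Set (Unit → ℕ)) := by
  have := rec_proj S (rec_of_recognizable S hadd) (fun _ : Unit => (2 : Fin 3))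
  convert this using 1
  symm
  rw [Set.eq_univ_iff_forall]
  intro t
  refine ⟨![0, t (), t ()], by simp, ?_⟩
  funext u
  rfl

theorem rec_univ (hadd : S.Addable) [Fintype ι] : Rec S (Set.univ : Set (ι → ℕ)) := by
  by_cases hι : Nonempty ι
  swap
  · -- no coordinates: the language is `a*`
    have := rec_proj S (rec_univ_unit S hadd) (κ := ι) (fun i => ())
    convert this using 1
    symm
    rw [Set.eq_univ_iff_forall]
    intro t
    refine ⟨fun _ => 0, trivial, ?_⟩
    funext i
    exact (hι ⟨i⟩).elim
  have h := reg_bool (κ := ι) (fun i => reg_comap (rec_univ_unit S hadd)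
    (fun (c : ι → Option A') (_ : Unit) => c i)) (fun p => ∀ i, p i)
  unfold Rec
  convert h using 1
  ext w
  constructor
  · rintro ⟨t, -, M, hf, rfl⟩ i
    refine ⟨fun _ => t i, trivial, M, fun _ => hf i, ?_⟩
    exact map_wd S t (fun _ : Unit => i) M
  · intro hw
    choose t _ M hf e using hw
    have hM : ∀ i, M i = w.length := by
      intro i
      have := congrArg List.length (e i)
      rw [length_wd, List.length_map] at this
      exact this.symm
    refine ⟨fun i => t i (), trivial, w.length, fun i => hM i ▸ hf i (), ?_⟩
    apply List.ext_getElem?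
    intro j
    by_cases hj : j < w.length
    · rw [wd_getD S _ _ j hj, List.getElem?_eq_getElem hj]
      congr 1
      funext i
      have h1 := congrArg (fun l => l[j]?) (e i)
      simp only [List.getElem?_map] at h1
      rw [hM i, wd_getD S _ _ j hj, List.getElem?_eq_getElem hj] at h1
      simp only [Option.map_some, Option.some.injEq] at h1
      exact congrFun h1 ()
    · rw [List.getElem?_eq_none (by omega), List.getElem?_eq_none (by rw [length_wd]; omega)]

/-- A set determined by finitely many recognizable predicates (pulled back along index maps)
is recognizable. -/
theorem rec_comap (hadd : S.Addable) [Fintype κ] {P : Set (ι → ℕ)} (h : Rec S P) (f : ι → κ) :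
    Rec S {t : κ → ℕ | (fun i => t (f i)) ∈ P} := by
  have := reg_inter (rec_univ S hadd (ι := κ))
    (reg_comap h (fun (c : κ → Option A') i => c (f i)))
  unfold Rec
  convert this using 1
  ext w
  constructor
  · rintro ⟨t, ht, M, hf, rfl⟩
    refine ⟨⟨t, trivial, M, hf, rfl⟩, ?_⟩
    rw [Set.mem_ofPred_eq, map_wd]
    exact ⟨_, ht, M, fun i => hf (f i), rfl⟩
  · rintro ⟨⟨t, -, M, hf, rfl⟩, h2⟩
    rw [Set.mem_ofPred_eq, map_wd, wd_mem_Lng S (fun i => hf (f i))] at h2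
    exact ⟨t, h2, M, hf, rfl⟩

theorem rec_bool (hadd : S.Addable) [Fintype ι] {θ : Type} [Fintype θ] {P : θ → Set (ι → ℕ)}
    (h : ∀ i, Rec S (P i)) (F : (θ → Prop) → Prop) :
    Rec S {t : ι → ℕ | F fun i => t ∈ P i} := by
  have := reg_inter (rec_univ S hadd (ι := ι)) (reg_bool h F)
  unfold Rec
  convert this using 1
  ext w
  constructor
  · rintro ⟨t, ht, M, hf, rfl⟩
    refine ⟨⟨t, trivial, M, hf, rfl⟩, ?_⟩
    have e : (fun i => wd S t M ∈ Lng S (P i)) = fun i => t ∈ P i :=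
      funext fun i => propext (wd_mem_Lng S hf)
    rw [Set.mem_ofPred_eq, e]
    exact ht
  · rintro ⟨⟨t, -, M, hf, rfl⟩, h2⟩
    have e : (fun i => wd S t M ∈ Lng S (P i)) = fun i => t ∈ P i :=
      funext fun i => propext (wd_mem_Lng S hf)
    rw [Set.mem_ofPred_eq, e] at h2
    exact ⟨t, h2, M, hf, rfl⟩

theorem rec_and (hadd : S.Addable) [Fintype ι] {P Q : (ι → ℕ) → Prop} (hP : Rec S {t | P t}) (hQ : Rec S {t | Q t}) :
    Rec S {t | P t ∧ Q t} := by
  have := rec_bool S hadd (θ := Bool) (P := fun i => if i then {t | P t} else {t | Q t})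
    (by intro i; cases i <;> simpa) (fun p => p true ∧ p false)
  simpa using this

theorem rec_not (hadd : S.Addable) [Fintype ι] {P : (ι → ℕ) → Prop} (hP : Rec S {t | P t}) :
    Rec S {t | ¬ P t} :=
  rec_bool S hadd (θ := Unit) (P := fun _ => {t | P t}) (fun _ => hP) (fun p => ¬ p ())

theorem rec_forall_fin (hadd : S.Addable) [Fintype ι] {θ : Type} [Fintype θ] {P : θ → (ι → ℕ) → Prop}
    (hP : ∀ i, Rec S {t | P i t}) : Rec S {t | ∀ i, P i t} :=
  rec_bool S hadd (P := fun i => {t | P i t}) hP (fun p => ∀ i, p i)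

theorem rec_exists_fin (hadd : S.Addable) [Fintype ι] {θ : Type} [Fintype θ] {P : θ → (ι → ℕ) → Prop}
    (hP : ∀ i, Rec S {t | P i t}) : Rec S {t | ∃ i, P i t} :=
  rec_bool S hadd (P := fun i => {t | P i t}) hP (fun p => ∃ i, p i)

theorem rec_exists [Finite ι] [Finite κ] {P : (ι → ℕ) → (κ → ℕ) → Prop}
    (hP : Rec S {t : ι ⊕ κ → ℕ | P (fun i => t (Sum.inl i)) (fun k => t (Sum.inr k))}) :
    Rec S {t : ι → ℕ | ∃ s : κ → ℕ, P t s} := by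
  have := rec_proj S hP (Sum.inl : ι → ι ⊕ κ)
  convert this using 1
  ext t
  constructor
  · rintro ⟨s, hs⟩
    exact ⟨Sum.elim t s, hs, rfl⟩
  · rintro ⟨u, hu, rfl⟩
    exact ⟨_, hu⟩

theorem rec_forall (hadd : S.Addable) [Fintype ι] [Fintype κ] {P : (ι → ℕ) → (κ → ℕ) → Prop}
    (hP : Rec S {t : ι ⊕ κ → ℕ | P (fun i => t (Sum.inl i)) (fun k => t (Sum.inr k))}) :
    Rec S {t : ι → ℕ | ∀ s : κ → ℕ, P t s} := by
  have := rec_not S hadd (rec_exists S (P := fun t s => ¬ P t s) (rec_not S hadd hP))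
  convert this using 3
  simp

theorem rec_add (hadd : S.Addable) [Fintype ι] (i j k : ι) : Rec S {t : ι → ℕ | t i + t j = t k} :=
  rec_comap S hadd (rec_of_recognizable S hadd) (![i, j, k])

theorem rec_le (hadd : S.Addable) [Fintype ι] (i j : ι) : Rec S {t : ι → ℕ | t i ≤ t j} := by
  have := rec_exists S (ι := ι) (κ := Unit) (P := fun t s => t i + s () = t j)
    (rec_add S hadd (Sum.inl i) (Sum.inr ()) (Sum.inl j))
  convert this using 3 with t
  constructor
  · intro h
    exact ⟨fun _ => t j - t i, Nat.add_sub_cancel' h⟩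
  · rintro ⟨s, hs⟩
    omega

theorem rec_const (hadd : S.Addable) [Fintype ι] (i : ι) (c : ℕ) : Rec S {t : ι → ℕ | t i = c} := by
  have h1 : S.Recognizable {t : Fin 1 → ℕ | t 0 = c} := by
    unfold ANS.Recognizable
    convert reg_singleton (padTuple fun _ : Fin 1 => S.rep c) using 1
    ext w
    constructor
    · rintro ⟨t, ht, rfl⟩
      have : t = fun _ => c := by
        funext i
        rw [Subsingleton.elim i 0]
        exact ht
      subst this
      rfl
    · rintro rfl
      exact ⟨fun _ => c, rfl, rfl⟩
  exact rec_comap S hadd (rec_of_recognizable S h1) (fun _ => i)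

theorem rec_shift (hadd : S.Addable) [Fintype ι] (i j : ι) (c : ℕ) : Rec S {t : ι → ℕ | t i = t j + c} := by
  have := rec_exists S (ι := ι) (κ := Unit) (P := fun t s => s () = c ∧ t j + s () = t i)
    (rec_and S hadd (rec_const S hadd (Sum.inr ()) c)
      (rec_add S hadd (Sum.inl j) (Sum.inr ()) (Sum.inl i)))
  convert this using 3 with t
  constructor
  · intro h
    exact ⟨fun _ => c, rfl, h.symm⟩
  · rintro ⟨s, hs, h⟩
    omega

end Rec

/-! ### Sliding block codes -/

section Block

variable {C D : Type*}

theorem isOpen_cyl [TopologicalSpace C] [DiscreteTopology C] (y : ℕ → C) (n : ℕ) :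
    IsOpen {z : ℕ → C | ∀ i < n, z i = y i} := by
  have : {z : ℕ → C | ∀ i < n, z i = y i} =
      ⋂ i ∈ Finset.range n, (fun z : ℕ → C => z i) ⁻¹' {y i} := by
    ext z
    simp
  rw [this]
  apply isOpen_biInter_finset
  intro i _
  exact (isOpen_discrete _).preimage (continuous_apply i)

theorem block {X : Set (ℕ → C)} (hX : IsSubshift X) {A : Set C} (hA : A.Finite)
    (hXA : ∀ x ∈ X, ∀ n, x n ∈ A) {Φ : (ℕ → C) → (ℕ → D)} (hΦ : ContOn Φ X) :
    ∃ r, ∀ x ∈ X, ∀ x' ∈ X, (∀ i < r, x i = x' i) → Φ x 0 = Φ x' 0 := by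
  classical
  let _ : TopologicalSpace C := ⊥
  have : DiscreteTopology C := ⟨rfl⟩
  have hcl : IsClosed X := by
    rw [← isOpen_compl_iff, isOpen_iff_mem_nhds]
    intro y hy
    have : ¬ ∀ n : ℕ, ∃ x ∈ X, ∀ i < n, y i = x i := fun h => hy (hX.2 y h)
    push Not at this
    obtain ⟨n, hn⟩ := this
    refine Filter.mem_of_superset ((isOpen_cyl y n).mem_nhds (fun i _ => rfl)) ?_
    intro z hz hzX
    obtain ⟨i, hi, hne⟩ := hn z hzX
    exact hne (hz i hi).symm
  have hcomp : IsCompact X := by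
    refine (isCompact_univ_pi (s := fun _ : ℕ => A) fun _ => hA.isCompact).of_isClosed_subset hcl ?_
    intro x hx n _
    exact hXA x hx n
  have hm : ∀ x : X, ∃ m : ℕ, ∀ y' ∈ X, (∀ i < m, y' i = x.1 i) → Φ y' 0 = Φ x.1 0 := by
    intro x
    obtain ⟨m, hm⟩ := hΦ x.1 x.2 1
    exact ⟨m, fun y' hy' h => hm y' hy' h 0 (by omega)⟩
  choose m hm using hm
  obtain ⟨T, hT⟩ := hcomp.elim_finite_subcover
    (fun x : X => {z : ℕ → C | ∀ i < m x, z i = x.1 i}) (fun x => isOpen_cyl _ _)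
    (fun x hx => Set.mem_iUnion.2 ⟨⟨x, hx⟩, fun i _ => rfl⟩)
  refine ⟨T.sup m, fun x hx x' hx' h => ?_⟩
  have := hT hx
  simp only [Set.mem_iUnion] at this
  obtain ⟨z, hz, hxz⟩ := this
  rw [hm z x hx hxz, hm z x' hx' (fun i hi => ?_)]
  rw [← h i (lt_of_lt_of_le hi (Finset.le_sup hz))]
  exact hxz i hi

theorem sliding {X : Set (ℕ → C)} (hX : IsSubshift X) {A : Set C} (hA : A.Finite)
    (hXA : ∀ x ∈ X, ∀ n, x n ∈ A) {Φ : (ℕ → C) → (ℕ → D)} (hΦ : ContOn Φ X)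
    (hs : ∀ x ∈ X, Φ (shiftMap x) = shiftMap (Φ x)) :
    ∃ r, ∀ x ∈ X, ∀ x' ∈ X, ∀ n m, (∀ i < r, x (n + i) = x' (m + i)) → Φ x n = Φ x' m := by
  obtain ⟨r, hr⟩ := block hX hA hXA hΦ
  have key : ∀ n, ∀ x ∈ X, (fun i => x (n + i)) ∈ X ∧
      Φ (fun i => x (n + i)) = fun i => Φ x (n + i) := by
    intro n
    induction n with
    | zero => intro x hx; simpa using hx
    | succ n ih =>
      intro x hx
      obtain ⟨h1, h2⟩ := ih (shiftMap x) (hX.1 x hx)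
      have e : (fun i => x (n + 1 + i)) = fun i => shiftMap x (n + i) := by
        funext i
        simp only [shiftMap]
        congr 1
        omega
      rw [e]
      refine ⟨h1, ?_⟩
      rw [h2, hs x hx]
      funext i
      simp only [shiftMap]
      congr 1
      omega
  refine ⟨r, fun x hx x' hx' n m h => ?_⟩
  obtain ⟨h1, h2⟩ := key n x hx
  obtain ⟨h3, h4⟩ := key m x' hx'
  have := hr _ h1 _ h3 h
  rw [h2, h4] at this
  simpa using this

theorem sum_bound {u : ℕ → C} {e : C} {z : ℕ → ℕ} {r c N : ℕ}
    (hz : ∀ n, z n ≠ 0 → ∃ i < r, u (n + i) ≠ e) (hc : ∀ n, z n ≤ c)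
    (hN : ∀ G : Finset ℕ, (∀ j ∈ G, u j ≠ e) → G.card ≤ N) (F : Finset ℕ) :
    ∑ i ∈ F, z i ≤ N * r * c := by
  classical
  let F' := F.filter fun n => z n ≠ 0
  let G := ((F ×ˢ Finset.range r).image fun p => p.1 + p.2).filter fun j => u j ≠ e
  have hG : G.card ≤ N := hN G (fun j hj => (Finset.mem_filter.1 hj).2)
  have hsub : F' ⊆ (G ×ˢ Finset.range r).image fun p => p.1 - p.2 := by
    intro n hn
    obtain ⟨hnF, hn0⟩ := Finset.mem_filter.1 hn
    obtain ⟨i, hi, hne⟩ := hz n hn0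
    refine Finset.mem_image.2 ⟨(n + i, i), Finset.mem_product.2 ⟨?_, Finset.mem_range.2 hi⟩, ?_⟩
    · exact Finset.mem_filter.2 ⟨Finset.mem_image.2 ⟨(n, i),
        Finset.mem_product.2 ⟨hnF, Finset.mem_range.2 hi⟩, rfl⟩, hne⟩
    · simp
  have hF' : F'.card ≤ N * r := by
    refine (Finset.card_le_card hsub).trans (Finset.card_image_le.trans ?_)
    rw [Finset.card_product, Finset.card_range]
    exact Nat.mul_le_mul_right _ hG
  calc ∑ i ∈ F, z i = ∑ i ∈ F', z i := (Finset.sum_filter_ne_zero F).symm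
    _ ≤ F'.card • c := Finset.sum_le_card_nsmul _ _ _ fun n _ => hc n
    _ ≤ N * r * c := by
      rw [smul_eq_mul]
      exact Nat.mul_le_mul_right _ hF'

theorem nu_exists {x : ℕ → ℕ} {K : ℕ} (hK : ∀ F : Finset ℕ, ∑ i ∈ F, x i ≤ K) :
    ∃ k' ≤ K, ∃ t : Fin k' → ℕ, Monotone t ∧
      (fun j => Set.ncard {i : Fin k' | t i = j}) = x := by
  classical
  have hfin : (Function.support x).Finite := by
    by_contra hinf
    obtain ⟨T, hT, hcard⟩ := Set.Infinite.exists_subset_card_eq hinf (K + 1)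
    have h1 : T.card • 1 ≤ ∑ i ∈ T, x i :=
      Finset.card_nsmul_le_sum _ _ _ fun i hi => Nat.one_le_iff_ne_zero.2 (hT hi)
    have h2 := hK T
    simp only [smul_eq_mul, mul_one] at h1
    omega
  let f : ℕ →₀ ℕ := Finsupp.ofSupportFinite x hfin
  let l : List ℕ := (Finsupp.toMultiset f).sort (· ≤ ·)
  have hcount : ∀ j, l.count j = x j := by
    intro j
    rw [← Multiset.coe_count, Multiset.sort_eq, Finsupp.count_toMultiset]
    rfl
  refine ⟨l.length, ?_, l.get, ?_, ?_⟩
  · rw [Multiset.length_sort, Finsupp.card_toMultiset]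
    exact hK _
  · exact (Multiset.pairwise_sort _ _).sortedLE.monotone_get
  · funext j
    rw [← hcount j, Set.ncard_eq_toFinset_card']
    have h := Fin.card_filter_univ_eq_vector_get_eq_count j (⟨l, rfl⟩ : List.Vector ℕ l.length)
    refine Eq.trans ?_ h
    congr 1
    ext i
    simp only [Set.mem_toFinset, Set.mem_ofPred_eq, Finset.mem_filter, Finset.mem_univ, true_and]
    exact Iff.rfl

end Block

/-! ### The main argument -/

section Main

theorem exists_pi {B : Type} [Fintype B] (b : B) :
    ∃ π : B ≃ Fin (Fintype.card B), (π b : ℕ) = 0 := by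
  classical
  have hpos : 0 < Fintype.card B := Fintype.card_pos_iff.2 ⟨b⟩
  let e := Fintype.equivFin B
  refine ⟨e.trans (Equiv.swap (e b) ⟨0, hpos⟩), ?_⟩
  simp

theorem rec_local {A' : Type} (S : ANS A') (hadd : S.Addable) (X : Set (ℕ → ℕ)) (k k' r : ℕ)
    (G : (Fin r → ℕ) → ℕ) (hX : S.Recognizable (nuSet X k')) :
    Rec S {t : Fin k → ℕ | ∃ s : Fin k' → ℕ, s ∈ nuSet X k' ∧ ∀ n : Unit → ℕ,
      Set.ncard {i | t i = n ()} =
        G fun j => Set.ncard {i | s i = n () + (j : ℕ)}} := by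
  apply rec_exists S (P := fun (t : Fin k → ℕ) (s : Fin k' → ℕ) =>
    s ∈ nuSet X k' ∧ ∀ n : Unit → ℕ, Set.ncard {i | t i = n ()} =
        G fun j => Set.ncard {i | s i = n () + (j : ℕ)})
  apply rec_and S hadd
  · exact rec_comap S hadd (rec_of_recognizable S hX) Sum.inr
  · apply rec_forall S hadd (P := fun (t : Fin k ⊕ Fin k' → ℕ) (n : Unit → ℕ) =>
      Set.ncard {i | t (Sum.inl i) = n ()} =
        G fun j => Set.ncard {i | t (Sum.inr i) = n () + (j : ℕ)})
    exact rec_bool S hadd (ι := (Fin k ⊕ Fin k') ⊕ Unit) (θ := Fin k ⊕ (Fin k' × Fin r))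
      (P := fun x => match x with
        | Sum.inl i => {t | t (Sum.inl (Sum.inl i)) = t (Sum.inr ()) + 0}
        | Sum.inr (i, j) => {t | t (Sum.inl (Sum.inr i)) = t (Sum.inr ()) + (j : ℕ)})
      (by
        rintro (i | ⟨i, j⟩)
        · exact rec_shift S hadd _ _ _
        · exact rec_shift S hadd _ _ _)
      (fun p => Set.ncard {i | p (Sum.inl i)} = G fun j => Set.ncard {i | p (Sum.inr (i, j))})

theorem core {A' : Type} (S : ANS A') (hadd : S.Addable)
    (A : Finset ℕ)
    (X : Set (ℕ → ℕ)) (hXsub : IsSubshift X) (hXA : ∀ x ∈ X, ∀ n : ℕ, x n ∈ A)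
    {B : Type} [Fintype B] (Y : Set (ℕ → B)) (hYsub : IsSubshift Y)
    (φ : (ℕ → B) → (ℕ → ℕ)) (ψ : (ℕ → ℕ) → (ℕ → B))
    (hφY : Set.MapsTo φ Y X) (hψX : Set.MapsTo ψ X Y)
    (hφcont : ContOn φ Y) (hψcont : ContOn ψ X)
    (hinv₁ : ∀ y ∈ Y, ψ (φ y) = y) (hinv₂ : ∀ x ∈ X, φ (ψ x) = x)
    (hshift : ∀ y ∈ Y, φ (shiftMap y) = shiftMap (φ y))
    (b : B) (hbY : (fun _ => b) ∈ Y) (hb0 : φ (fun _ => b) = fun _ => 0)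
    (π : B ≃ Fin (Fintype.card B)) (hπ : (π b : ℕ) = 0) :
    (WeaklySCodable S X →
        WeaklySCodable S ((fun y : ℕ → B => fun n => ((π (y n) : ℕ))) '' Y)) ∧
    (FiniteCodingDim X →
        FiniteCodingDim ((fun y : ℕ → B => fun n => ((π (y n) : ℕ))) '' Y)) := by
  classical
  have hψshift : ∀ x ∈ X, ψ (shiftMap x) = shiftMap (ψ x) := by
    intro x hx
    have h1 := hshift (ψ x) (hψX hx)
    rw [hinv₂ x hx] at h1
    rw [← h1, hinv₁ _ (hYsub.1 _ (hψX hx))]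
  have h0X : (fun _ => 0) ∈ X := hb0 ▸ hφY hbY
  have hψ0 : ψ (fun _ => 0) = fun _ => b := by rw [← hb0, hinv₁ _ hbY]
  obtain ⟨r, hr⟩ := sliding hXsub A.finite_toSet hXA hψcont hψshift
  obtain ⟨q, hq⟩ := sliding hYsub (Set.finite_univ (α := B)) (fun _ _ _ => trivial) hφcont hshift
  have hπne : ∀ c : B, (π c : ℕ) ≠ 0 ↔ c ≠ b := by
    intro c
    rw [not_iff_not]
    constructor
    · intro h
      apply π.injective
      apply Fin.ext
      rw [h, hπ]
    · rintro rfl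
      exact hπ
  have hψloc : ∀ x ∈ X, ∀ n, (π (ψ x n) : ℕ) ≠ 0 → ∃ i < r, x (n + i) ≠ 0 := by
    intro x hx n hne
    by_contra hcon
    push Not at hcon
    have := hr x hx _ h0X n n hcon
    rw [hψ0] at this
    exact (hπne _).1 hne this
  have hφloc : ∀ y ∈ Y, ∀ n, φ y n ≠ 0 → ∃ i < q, y (n + i) ≠ b := by
    intro y hy n hne
    by_contra hcon
    push Not at hcon
    have := hq y hy _ hbY n n hcon
    rw [hb0] at this
    exact hne this
  constructor
  · intro hX k
    obtain ⟨G, hG⟩ : ∃ G : (Fin r → ℕ) → ℕ, ∀ x ∈ X, ∀ n,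
        (π (ψ x n) : ℕ) = G fun j => x (n + j) := by
      refine ⟨fun w => if h : ∃ p : (ℕ → ℕ) × ℕ, p.1 ∈ X ∧ ∀ j : Fin r, p.1 (p.2 + j) = w j
        then (π (ψ h.choose.1 h.choose.2) : ℕ) else 0, ?_⟩
      intro x hx n
      have h : ∃ p : (ℕ → ℕ) × ℕ, p.1 ∈ X ∧ ∀ j : Fin r, p.1 (p.2 + j) = x (n + j) :=
        ⟨(x, n), hx, fun _ => rfl⟩
      simp only
      rw [dif_pos h]
      rw [hr x hx _ h.choose_spec.1 n h.choose.2
        (fun i hi => (h.choose_spec.2 ⟨i, hi⟩).symm)]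
    let K := k * q * A.sup id
    apply recognizable_of_rec S
    have hrec := rec_and S hadd (ι := Fin k) (P := fun t => ∀ p : Fin k × Fin k, p.1 ≤ p.2 → t p.1 ≤ t p.2)
      (rec_forall_fin S hadd (θ := Fin k × Fin k)
        (P := fun p t => p.1 ≤ p.2 → t p.1 ≤ t p.2) (fun p =>
          rec_bool S hadd (θ := Unit) (fun _ => rec_le S hadd p.1 p.2)
            (fun f => p.1 ≤ p.2 → f ())))
      (rec_exists_fin S hadd (θ := Fin (K + 1))
        (P := fun k' t => ∃ s : Fin k' → ℕ, s ∈ nuSet X k' ∧ ∀ n : Unit → ℕ,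
          Set.ncard {i | t i = n ()} = G fun j => Set.ncard {i | s i = n () + (j : ℕ)})
        (fun k' => rec_local S hadd X k k' r G (hX k')))
    convert hrec using 1
    ext t
    constructor
    · rintro ⟨hmono, y, hy, hyt⟩
      have hyt' : ∀ j, (π (y j) : ℕ) = Set.ncard {i : Fin k | t i = j} := fun j => congrFun hyt j
      refine ⟨fun p hp => hmono hp, ?_⟩
      have hbound : ∀ F : Finset ℕ, ∑ i ∈ F, φ y i ≤ K := by
        apply sum_bound (hφloc y hy)
        · intro n
          exact Finset.le_sup (f := id) (hXA _ (hφY hy) n)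
        · intro H hH
          have : H ⊆ Finset.univ.image t := by
            intro j hj
            have h1 := (hπne _).2 (hH j hj)
            rw [hyt' j] at h1
            obtain ⟨i, hi⟩ := Set.nonempty_of_ncard_ne_zero h1
            exact Finset.mem_image.2 ⟨i, Finset.mem_univ _, hi⟩
          refine (Finset.card_le_card this).trans (Finset.card_image_le.trans ?_)
          simp
      obtain ⟨k', hk', s, hs, hsx⟩ := nu_exists hbound
      refine ⟨⟨k', by omega⟩, s, ⟨hs, ?_⟩, fun n => ?_⟩
      · rw [hsx]
        exact hφY hy
      · have h1 := hG (φ y) (hφY hy) (n ())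
        rw [hinv₁ y hy, hyt' (n ())] at h1
        rw [h1]
        congr 1
        funext j
        exact (congrFun hsx _).symm
    · rintro ⟨hmono, k', s, ⟨hs, hsX⟩, hloc⟩
      refine ⟨fun i j hij => hmono (i, j) hij, ψ _, hψX hsX, ?_⟩
      funext n
      simp only
      rw [hG _ hsX n]
      exact (hloc fun _ => n).symm
  · rintro ⟨d, hd⟩
    refine ⟨d * r * Fintype.card B, ?_⟩
    rintro _ ⟨y, hy, rfl⟩
    have hloc := hψloc (φ y) (hφY hy)
    rw [hinv₁ y hy] at hloc
    apply sum_bound hloc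
    · intro n
      exact (π (y n)).2.le
    · intro H hH
      refine le_trans ?_ (hd _ (hφY hy) H)
      have h1 : H.card • 1 ≤ ∑ i ∈ H, φ y i :=
        Finset.card_nsmul_le_sum _ _ _ fun i hi => Nat.one_le_iff_ne_zero.2 (hH i hi)
      simpa using h1

end Main

end Stmt19Aux

/-- Weak `S`-codability and `S`-codability of subshifts (for addable `S`)
are preserved under conjugacies mapping the zero point to the zero point. -/
theorem stmt19 {A' : Type} [Fintype A'] (S : ANS A') (hadd : S.Addable)
    (A : Finset ℕ) (h0A : (0 : ℕ) ∈ A)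
    (X : Set (ℕ → ℕ)) (hXsub : IsSubshift X) (hXA : ∀ x ∈ X, ∀ n : ℕ, x n ∈ A)
    {B : Type} [Fintype B] (Y : Set (ℕ → B)) (hYsub : IsSubshift Y)
    (φ : (ℕ → B) → (ℕ → ℕ)) (ψ : (ℕ → ℕ) → (ℕ → B))
    (hφY : Set.MapsTo φ Y X) (hψX : Set.MapsTo ψ X Y)
    (hφcont : ContOn φ Y) (hψcont : ContOn ψ X)
    (hinv₁ : ∀ y ∈ Y, ψ (φ y) = y) (hinv₂ : ∀ x ∈ X, φ (ψ x) = x)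
    (hshift : ∀ y ∈ Y, φ (shiftMap y) = shiftMap (φ y))
    (b : B) (hbY : (fun _ => b) ∈ Y) (hb0 : φ (fun _ => b) = fun _ => 0) :
    (WeaklySCodable S X →
      ∃ π : B ≃ Fin (Fintype.card B), (π b : ℕ) = 0 ∧
        WeaklySCodable S ((fun y : ℕ → B => fun n => ((π (y n) : ℕ))) '' Y)) ∧
    (SCodable S X →
      ∃ π : B ≃ Fin (Fintype.card B), (π b : ℕ) = 0 ∧
        SCodable S ((fun y : ℕ → B => fun n => ((π (y n) : ℕ))) '' Y)) := by
  obtain ⟨π, hπ⟩ := Stmt19Aux.exists_pi b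
  have h := Stmt19Aux.core S hadd A X hXsub hXA Y hYsub φ ψ hφY hψX hφcont hψcont hinv₁ hinv₂
    hshift b hbY hb0 π hπ
  exact ⟨fun hX => ⟨π, hπ, h.1 hX⟩, fun hX => ⟨π, hπ, h.1 hX.1, h.2 hX.2⟩⟩
end
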